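/- arXiv:1209.6504 — 2 statements merged into one kernel-verified Lean document; each statement's English description precedes it below -/
import Mathlib

section
/- Let f : I → I be Borel measurable, with f differentiable at every point of I \ {0}, f'(x) ≥ c for all x ∈ I \ {0} for some constant c > 1, and such that the function 1/f' has bounded variation on each of the two branches [-1/2,0) and (0,1/2]. Assume moreover that f is topologically transitive on I. Then f admits a unique invariant Borel probability measure μ̄ that is absolutely continuous with respect to Lebesgue measure λ; this measure μ̄ is ergodic, and its Radon–Nikodym density dμ̄/dλ is λ-essentially bounded (it coincides λ-a.e. with a function of bounded variation). -/
/-!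
The proof studies the transfer operator `P h y = ∑_{f x = y} h x / f' x`, for which
`∫_A P h = ∫_{f⁻¹ A} h` when `h ≥ 0` (`LorenzMap.lintegral_transfer`).

*Lasota–Yorke inequality.* `Pⁿ h` is a sum of monotone reparametrisations of `wₙ h`, where `wₙ` is
the weight `1 / (fⁿ)'`, so its variation is at most that of `wₙ h`. Since `0 ≤ wₙ ≤ c⁻ⁿ` and `wₙ`
has bounded variation, its variation is at most `4 c⁻ⁿ` on each interval of a fine enough grid, and
this gives `Var (Pⁿ h) ≤ 5 c⁻ⁿ Var h + B ‖h‖₁` (`LorenzMap.lasota_yorke`). Cutting along a grid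
adapted to `wₙ` avoids any distortion estimate and any lower bound on the lengths of the monotonicity
intervals of `fⁿ`.

*Existence.* Iterating, `Pᵐ 1` has variation, hence size, bounded uniformly in `m`: the images of
Lebesgue measure `λ` on `I` satisfy `λ (f⁻ᵐ A) ≤ M λ A` (`LorenzMap.exists_volume_preimage_le`). The
Cesàro averages of these images converge set by set along an ultrafilter, and domination by `M λ`
makes the limit a measure, invariant and with density at most `M`
(`exists_invariant_of_preimage_le`).

*Ergodicity.* If `E` is invariant of positive measure, take a density point of `E` and push forward
the indicator of a small interval around it. The iterates eventually have variation at most `C` times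
their mass, while their mass stays almost entirely in `E`; so `E` must fill, up to a null set, one of
the intervals of a grid that depends only on `C` (`LorenzMap.exists_grid_diff_null`). If both `E` and
its complement had positive measure, a dense orbit would go from an interval filled by `E` to one
filled by the complement, and continuity of an iterate of `f` along this orbit, together with
`λ (f⁻ᵏ A) ≤ M λ A`, gives a contradiction (`LorenzMap.invariant_null_or_conull`).
Hence every absolutely continuous invariant probability measure is ergodic, and uniqueness follows by
comparing two of them with their mean.
-/

open MeasureTheory Set Filter Topology
open scoped ENNReal

noncomputable section

/-- The interval `I = [-1/2, 1/2] ⊆ ℝ`. -/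
def I01 : Set ℝ := Set.Icc (-(1 / 2)) (1 / 2)

/-! ### Total variation -/

lemma eVariationOn_mul_le {u v : ℝ → ℝ} {s : Set ℝ} {A B : ℝ≥0∞}
    (hu : ∀ x ∈ s, ‖u x‖ₑ ≤ A) (hv : ∀ x ∈ s, ‖v x‖ₑ ≤ B) :
    eVariationOn (fun x => u x * v x) s ≤ A * eVariationOn v s + B * eVariationOn u s := by
  refine iSup_le ?_
  rintro ⟨n, p, hp, hps⟩
  calc ∑ i ∈ Finset.range n, edist (u (p (i + 1)) * v (p (i + 1))) (u (p i) * v (p i))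
      ≤ ∑ i ∈ Finset.range n, (A * edist (v (p (i + 1))) (v (p i))
          + B * edist (u (p (i + 1))) (u (p i))) := by
        refine Finset.sum_le_sum fun i _ => ?_
        rw [edist_eq_enorm_sub, edist_eq_enorm_sub, edist_eq_enorm_sub]
        have : u (p (i + 1)) * v (p (i + 1)) - u (p i) * v (p i)
            = u (p (i + 1)) * (v (p (i + 1)) - v (p i))
              + v (p i) * (u (p (i + 1)) - u (p i)) := by ring
        rw [this]
        refine (enorm_add_le _ _).trans ?_
        rw [enorm_mul, enorm_mul]
        gcongr
        · exact hu _ (hps _)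
        · exact hv _ (hps _)
    _ = A * ∑ i ∈ Finset.range n, edist (v (p (i + 1))) (v (p i))
          + B * ∑ i ∈ Finset.range n, edist (u (p (i + 1))) (u (p i)) := by
        rw [Finset.sum_add_distrib, Finset.mul_sum, Finset.mul_sum]
    _ ≤ _ := by
        gcongr
        · exact eVariationOn.sum_le hp hps
        · exact eVariationOn.sum_le hp hps

lemma eVariationOn_add_le' (u v : ℝ → ℝ) (s : Set ℝ) :
    eVariationOn (fun x => u x + v x) s ≤ eVariationOn u s + eVariationOn v s := by
  refine iSup_le ?_
  rintro ⟨n, p, hp, hps⟩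
  calc ∑ i ∈ Finset.range n, edist (u (p (i + 1)) + v (p (i + 1))) (u (p i) + v (p i))
      ≤ ∑ i ∈ Finset.range n, (edist (u (p (i + 1))) (u (p i))
          + edist (v (p (i + 1))) (v (p i))) :=
        Finset.sum_le_sum fun i _ => edist_add_add_le _ _ _ _
    _ ≤ _ := by
        rw [Finset.sum_add_distrib]
        gcongr
        · exact eVariationOn.sum_le hp hps
        · exact eVariationOn.sum_le hp hps

/-- Bounded variation passes from an open interval to its closure, whatever the values at the
endpoints: one-sided limits exist there, so each endpoint adds a finite jump. -/
lemma boundedVariationOn_Icc_of_Ioo {u : ℝ → ℝ} {a b : ℝ} (hab : a < b)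
    (h : BoundedVariationOn u (Ioo a b)) : BoundedVariationOn u (Icc a b) := by
  have h1 : BoundedVariationOn u (Ico a b) := by
    obtain ⟨l, hl⟩ := h.exists_tendsto_right a
    have e1 : Ioo a b ∩ Ioi a = Iio b ∩ Ioi a := by ext; simp; tauto
    have e2 : Iio b ∩ Ioi a = Ioo a b := by ext; simp; tauto
    have e3 : Iio b ∩ Ici a = Ico a b := by ext; simp; tauto
    rw [e1] at hl
    have hne : (𝓝[Iio b ∩ Ioi a] a).NeBot := by
      rw [e2]; exact left_nhdsWithin_Ioo_neBot hab
    have := eVariationOn.eVariationOn_on_inter_Ici_eq_Ioi_add_edist hne hab hl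
    rw [e2, e3] at this
    rw [BoundedVariationOn, this]
    exact ENNReal.add_ne_top.2 ⟨h, edist_ne_top _ _⟩
  obtain ⟨l, hl⟩ := h1.exists_tendsto_left b
  have e1 : Ico a b ∩ Iio b = Ici a ∩ Iio b := by ext; simp
  have e2 : Ici a ∩ Iio b = Ico a b := by ext; simp
  have e3 : Ici a ∩ Iic b = Icc a b := by ext; simp
  rw [e1] at hl
  have hne : (𝓝[Ici a ∩ Iio b] b).NeBot := by
    rw [e2]; exact right_nhdsWithin_Ico_neBot hab
  have := eVariationOn.eVariationOn_on_inter_Iic_eq_Iio_add_edist hne hab.le hl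
  rw [e2, e3] at this
  rw [BoundedVariationOn, this]
  exact ENNReal.add_ne_top.2 ⟨h1, edist_ne_top _ _⟩

lemma eVariationOn_I01_eq (u : ℝ → ℝ) : eVariationOn u I01 =
    eVariationOn u (Icc (-(1 / 2)) 0) + eVariationOn u (Icc 0 (1 / 2)) := by
  have := eVariationOn.Icc_add_Icc u (s := univ) (a := -(1 / 2)) (b := (0 : ℝ)) (c := 1 / 2)
    (by norm_num) (by norm_num) trivial
  simpa [I01] using this.symm

lemma edist_le_of_tendsto {w : ℝ → ℝ} {ε : ℝ} {x l : ℝ} {L : Filter ℝ} [L.NeBot]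
    (h : Tendsto w L (𝓝 l)) (hL : ∀ᶠ y in L, w y ∈ Icc 0 ε) (hx : w x ∈ Icc 0 ε) :
    edist (w x) l ≤ ENNReal.ofReal ε := by
  have hl : l ∈ Icc 0 ε := isClosed_Icc.mem_of_tendsto h hL
  rw [edist_dist]
  refine ENNReal.ofReal_le_ofReal ?_
  rw [Real.dist_eq, abs_le]
  constructor <;> linarith [hx.1, hx.2, hl.1, hl.2]

/-- A function of bounded variation with values in `[0, ε]` has jumps of size at most `ε`, so its
variation over a short enough interval is at most `4 ε`, uniformly in the interval. -/
lemma exists_small_variation {w : ℝ → ℝ} {ε : ℝ} (hε : 0 < ε) (hw : ∀ x ∈ I01, w x ∈ Icc 0 ε)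
    (hbv : BoundedVariationOn w I01) :
    ∃ δ > 0, ∀ a ∈ I01, ∀ b ∈ I01, a ≤ b → b - a < δ →
      eVariationOn w (Icc a b) ≤ ENNReal.ofReal (4 * ε) := by
  have hlt : ENNReal.ofReal ε < ENNReal.ofReal (2 * ε) :=
    (ENNReal.ofReal_lt_ofReal_iff (by linarith)).2 (by linarith)
  have key : ∀ x ∈ I01, ∃ r > 0, ∀ a ∈ I01, ∀ b ∈ I01, a ≤ b → a ∈ Metric.ball x r →
      b ∈ Metric.ball x r → eVariationOn w (Icc a b) ≤ ENNReal.ofReal (4 * ε) := by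
    intro x hx
    have hleft : ∀ᶠ y in 𝓝[I01 ∩ Iio x] x,
        eVariationOn w (I01 ∩ Icc y x) < ENNReal.ofReal (2 * ε) := by
      rcases eq_or_neBot (𝓝[I01 ∩ Iio x] x) with h | h
      · rw [h]; exact eventually_bot
      obtain ⟨l, hl⟩ := hbv.exists_tendsto_left x
      refine (hbv.tendsto_eVariationOn_Icc_left hl hx).eventually_lt_const (lt_of_le_of_lt ?_ hlt)
      refine edist_le_of_tendsto hl ?_ (hw x hx)
      filter_upwards [self_mem_nhdsWithin] with y hy using hw y hy.1
    have hright : ∀ᶠ y in 𝓝[I01 ∩ Ioi x] x,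
        eVariationOn w (I01 ∩ Icc x y) < ENNReal.ofReal (2 * ε) := by
      rcases eq_or_neBot (𝓝[I01 ∩ Ioi x] x) with h | h
      · rw [h]; exact eventually_bot
      obtain ⟨l, hl⟩ := hbv.exists_tendsto_right x
      refine (hbv.tendsto_eVariationOn_Icc_right hl hx).eventually_lt_const (lt_of_le_of_lt ?_ hlt)
      refine edist_le_of_tendsto hl ?_ (hw x hx)
      filter_upwards [self_mem_nhdsWithin] with y hy using hw y hy.1
    rw [Filter.Eventually, Metric.mem_nhdsWithin_iff] at hleft hright
    obtain ⟨r1, hr1, H1⟩ := hleft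
    obtain ⟨r2, hr2, H2⟩ := hright
    have hsum : ENNReal.ofReal (4 * ε) = ENNReal.ofReal (2 * ε) + ENNReal.ofReal (2 * ε) := by
      rw [← ENNReal.ofReal_add (by linarith) (by linarith)]; congr 1; ring
    have L : ∀ a ∈ I01, a ∈ Metric.ball x (min r1 r2) → a ≤ x →
        eVariationOn w (Icc a x) ≤ ENNReal.ofReal (2 * ε) := by
      intro a ha hab hax
      rcases hax.eq_or_lt with rfl | hax
      · simp
      · have := H1 ⟨Metric.ball_subset_ball (min_le_left _ _) hab, ha, hax⟩
        rw [mem_ofPred_eq, inter_eq_right.2 (show Icc a x ⊆ I01 from Icc_subset_Icc ha.1 hx.2)] at this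
        exact this.le
    have R : ∀ b ∈ I01, b ∈ Metric.ball x (min r1 r2) → x ≤ b →
        eVariationOn w (Icc x b) ≤ ENNReal.ofReal (2 * ε) := by
      intro b hb hbb hxb
      rcases hxb.eq_or_lt with rfl | hxb
      · simp
      · have := H2 ⟨Metric.ball_subset_ball (min_le_right _ _) hbb, hb, hxb⟩
        rw [mem_ofPred_eq, inter_eq_right.2 (show Icc x b ⊆ I01 from Icc_subset_Icc hx.1 hb.2)] at this
        exact this.le
    refine ⟨min r1 r2, lt_min hr1 hr2, fun a ha b hb hab ha' hb' => ?_⟩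
    rw [hsum]
    rcases le_total a x with hax | hxa
    · rcases le_total x b with hxb | hbx
      · have := eVariationOn.Icc_add_Icc w (s := univ) hax hxb trivial
        simp only [univ_inter] at this
        rw [← this]
        exact add_le_add (L a ha ha' hax) (R b hb hb' hxb)
      · exact (eVariationOn.mono w (Icc_subset_Icc_right hbx)).trans
          ((L a ha ha' hax).trans le_self_add)
    · exact (eVariationOn.mono w (Icc_subset_Icc_left hxa)).trans
          ((R b hb hb' (hxa.trans hab)).trans le_self_add)
  choose! r hr H using key
  obtain ⟨δ, hδ, hδ'⟩ := lebesgue_number_lemma_of_metric (s := I01) (ι := I01)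
    (c := fun i => Metric.ball i.1 (r i.1)) isCompact_Icc (fun _ => Metric.isOpen_ball)
    (fun x hx => mem_iUnion.2 ⟨⟨x, hx⟩, Metric.mem_ball_self (hr x hx)⟩)
  refine ⟨δ, hδ, fun a ha b hb hab hlt => ?_⟩
  obtain ⟨i, hi⟩ := hδ' a ha
  refine H i.1 i.2 a ha b hb hab (hi (Metric.mem_ball_self hδ)) (hi ?_)
  rw [Metric.mem_ball, Real.dist_eq, abs_lt]
  constructor <;> linarith

/-- The size of `h` at a point of `J` exceeds the mean of `|h|` over a subset `A ⊆ J` by at most the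
variation of `h` on `J`. The inequality is multiplied through by the measure of `A`. -/
lemma enorm_mul_volume_le {h : ℝ → ℝ} {J A : Set ℝ} (hA : MeasurableSet A) (hAJ : A ⊆ J) {x : ℝ}
    (hx : x ∈ J) : ‖h x‖ₑ * volume A ≤ eVariationOn h J * volume A + ∫⁻ y in A, ‖h y‖ₑ := by
  rw [← setLIntegral_const, ← setLIntegral_const, ← lintegral_add_left measurable_const]
  refine setLIntegral_mono' hA fun y hy => ?_
  calc ‖h x‖ₑ = ‖(h x - h y) + h y‖ₑ := by ring_nf
    _ ≤ ‖h x - h y‖ₑ + ‖h y‖ₑ := enorm_add_le _ _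
    _ ≤ _ := by
      gcongr
      rw [← edist_eq_enorm_sub]
      exact eVariationOn.edist_le h hx (hAJ hy)

/-- The `k`-th point of the subdivision of `I` into `N` intervals of length `1 / N`. -/
def gridPt (N k : ℕ) : ℝ := -(1 / 2) + k / N

lemma gridPt_mono (N : ℕ) : Monotone (gridPt N) := by
  intro i j h
  unfold gridPt
  gcongr

lemma gridPt_zero (N : ℕ) : gridPt N 0 = -(1 / 2) := by simp [gridPt]

lemma gridPt_self {N : ℕ} (hN : 0 < N) : gridPt N N = 1 / 2 := by
  have : (N : ℝ) ≠ 0 := by positivity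
  rw [gridPt, div_self this]; norm_num

lemma gridPt_mem {N k : ℕ} (hN : 0 < N) (hk : k ≤ N) : gridPt N k ∈ I01 :=
  ⟨(gridPt_zero N).symm.le.trans (gridPt_mono N (Nat.zero_le k)),
    (gridPt_mono N hk).trans (gridPt_self hN).le⟩

lemma gridPt_succ_sub (N k : ℕ) : gridPt N (k + 1) - gridPt N k = 1 / N := by
  unfold gridPt; push_cast; ring

lemma volume_grid (N k : ℕ) :
    volume (Ioc (gridPt N k) (gridPt N (k + 1))) = ENNReal.ofReal (1 / N) := by
  rw [Real.volume_Ioc, gridPt_succ_sub]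

lemma sum_eVariationOn_grid (h : ℝ → ℝ) {N : ℕ} (hN : 0 < N) :
    ∑ k ∈ Finset.range N, eVariationOn h (Icc (gridPt N k) (gridPt N (k + 1)))
      = eVariationOn h I01 := by
  rw [eVariationOn.sum' h (gridPt_mono N), gridPt_zero, gridPt_self hN, I01]

lemma sum_lintegral_grid (φ : ℝ → ℝ≥0∞) {N : ℕ} (hN : 0 < N) {E : Set ℝ} (hE : MeasurableSet E) :
    ∑ k ∈ Finset.range N, ∫⁻ x in Ioc (gridPt N k) (gridPt N (k + 1)) ∩ E, φ x
      = ∫⁻ x in I01 ∩ E, φ x := by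
  have hd : ∀ n, ∑ k ∈ Finset.range n, ∫⁻ x in Ioc (gridPt N k) (gridPt N (k + 1)) ∩ E, φ x
      = ∫⁻ x in Ioc (gridPt N 0) (gridPt N n) ∩ E, φ x := by
    intro n
    induction n with
    | zero => simp
    | succ n ih =>
      rw [Finset.sum_range_succ, ih, ← lintegral_union (measurableSet_Ioc.inter hE),
        ← union_inter_distrib_right, Ioc_union_Ioc_eq_Ioc (gridPt_mono N (Nat.zero_le n))
          (gridPt_mono N (Nat.le_succ n))]
      refine Disjoint.mono inter_subset_left inter_subset_left ?_
      rw [Set.disjoint_left]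
      exact fun x hx hx' => not_le.2 hx'.1 hx.2
  rw [hd, gridPt_zero, gridPt_self hN]
  exact setLIntegral_congr (Ioc_ae_eq_Icc.inter (ae_eq_refl E))

/-- The analytic core of the Lasota–Yorke inequality: multiplication by a weight of size at most `ε`
contracts the variation by the factor `5 ε`, up to a multiple of the `L¹` norm. -/
lemma exists_mul_variation_le {w : ℝ → ℝ} {ε : ℝ} (hε : 0 < ε) (hw : ∀ x ∈ I01, w x ∈ Icc 0 ε)
    (hbv : BoundedVariationOn w I01) :
    ∃ B : ℝ≥0∞, B ≠ ∞ ∧ ∀ h : ℝ → ℝ, eVariationOn (fun x => w x * h x) I01 ≤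
      ENNReal.ofReal (5 * ε) * eVariationOn h I01 + B * ∫⁻ x in I01, ‖h x‖ₑ := by
  obtain ⟨δ, hδ, hsmall⟩ := exists_small_variation hε hw hbv
  obtain ⟨N, hN⟩ := exists_nat_one_div_lt hδ
  set M := N + 1 with hM
  have hM0 : 0 < M := Nat.succ_pos N
  have hMδ : 1 / (M : ℝ) < δ := by rw [hM]; push_cast; exact hN
  have hMr : (0 : ℝ) < M := by exact_mod_cast hM0
  have h1M : ENNReal.ofReal (1 / M) * (M : ℝ≥0∞) = 1 := by
    rw [← ENNReal.ofReal_natCast M, ← ENNReal.ofReal_mul (by positivity)]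
    rw [one_div_mul_cancel hMr.ne', ENNReal.ofReal_one]
  refine ⟨ENNReal.ofReal (4 * ε) * M, ENNReal.mul_ne_top ENNReal.ofReal_ne_top
    (ENNReal.natCast_ne_top M), fun h => ?_⟩
  have hk : ∀ k ∈ Finset.range M,
      eVariationOn (fun x => w x * h x) (Icc (gridPt M k) (gridPt M (k + 1))) ≤
        ENNReal.ofReal (5 * ε) * eVariationOn h (Icc (gridPt M k) (gridPt M (k + 1)))
        + ENNReal.ofReal (4 * ε) * M *
          ∫⁻ x in Ioc (gridPt M k) (gridPt M (k + 1)) ∩ univ, ‖h x‖ₑ := by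
    intro k hk
    have hk' : k + 1 ≤ M := Finset.mem_range.1 hk
    have m1 := gridPt_mem hM0 (Nat.le_of_succ_le hk')
    have m2 := gridPt_mem hM0 hk'
    set J := Icc (gridPt M k) (gridPt M (k + 1)) with hJ
    set A := Ioc (gridPt M k) (gridPt M (k + 1)) with hA
    have hJI : J ⊆ I01 := Icc_subset_Icc m1.1 m2.2
    have hvol : volume A = ENNReal.ofReal (1 / M) := volume_grid M k
    have hsup : ∀ x ∈ J, ‖h x‖ₑ ≤ eVariationOn h J + M * ∫⁻ y in A, ‖h y‖ₑ := by
      intro x hx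
      have := enorm_mul_volume_le (h := h) (measurableSet_Ioc : MeasurableSet A)
        Ioc_subset_Icc_self hx
      rw [hvol] at this
      calc ‖h x‖ₑ = (‖h x‖ₑ * ENNReal.ofReal (1 / M)) * M := by rw [mul_assoc, h1M, mul_one]
        _ ≤ (eVariationOn h J * ENNReal.ofReal (1 / M) + ∫⁻ y in A, ‖h y‖ₑ) * M := by gcongr
        _ = _ := by rw [add_mul, mul_assoc, h1M, mul_one, mul_comm (M : ℝ≥0∞)]
    have hwb : ∀ x ∈ J, ‖w x‖ₑ ≤ ENNReal.ofReal ε := by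
      intro x hx
      have := hw x (hJI hx)
      rw [Real.enorm_of_nonneg this.1]
      exact ENNReal.ofReal_le_ofReal this.2
    have hwv : eVariationOn w J ≤ ENNReal.ofReal (4 * ε) :=
      hsmall _ m1 _ m2 (gridPt_mono M (Nat.le_succ k)) (by rw [gridPt_succ_sub]; exact hMδ)
    calc eVariationOn (fun x => w x * h x) J
        ≤ ENNReal.ofReal ε * eVariationOn h J
          + (eVariationOn h J + M * ∫⁻ y in A, ‖h y‖ₑ) * eVariationOn w J :=
          eVariationOn_mul_le hwb hsup
      _ ≤ ENNReal.ofReal ε * eVariationOn h J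
          + (eVariationOn h J + M * ∫⁻ y in A, ‖h y‖ₑ) * ENNReal.ofReal (4 * ε) := by gcongr
      _ = (ENNReal.ofReal ε + ENNReal.ofReal (4 * ε)) * eVariationOn h J
          + ENNReal.ofReal (4 * ε) * M * ∫⁻ y in A, ‖h y‖ₑ := by ring
      _ = _ := by
          rw [← ENNReal.ofReal_add hε.le (by linarith), inter_univ]
          congr 3; ring
  rw [← sum_eVariationOn_grid _ hM0, ← sum_eVariationOn_grid h hM0]
  refine (Finset.sum_le_sum hk).trans_eq ?_
  rw [Finset.sum_add_distrib, ← Finset.mul_sum, ← Finset.mul_sum,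
    sum_lintegral_grid _ hM0 MeasurableSet.univ, inter_univ]


/-! ### Branches and the transfer operator -/

/-- The standing hypotheses: an expanding map of `I` with two increasing branches, separated by the
singularity at `0`, whose inverse derivative has bounded variation on each branch. -/
structure LorenzMap (f f' : ℝ → ℝ) (c : ℝ) : Prop where
  one_lt : 1 < c
  meas : Measurable f
  maps : Set.MapsTo f I01 I01
  deriv : ∀ x ∈ I01 \ ({0} : Set ℝ), HasDerivAt f (f' x) x
  le_deriv : ∀ x ∈ I01 \ ({0} : Set ℝ), c ≤ f' x
  bv_left : BoundedVariationOn (fun x => 1 / f' x) (Set.Ico (-(1 / 2)) 0)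
  bv_right : BoundedVariationOn (fun x => 1 / f' x) (Set.Ioc 0 (1 / 2))

/-- A monotone extension to `ℝ` of the inverse of the branch of `f` on `(a, b)`: it takes the value
`a` below the image of the branch and `b` above it. -/
def branchInv (f : ℝ → ℝ) (a b y : ℝ) : ℝ := sSup (insert a {x ∈ Ioo a b | f x ≤ y})

section Branch

variable {f : ℝ → ℝ} {a b : ℝ}

lemma branchInv_bddAbove (hab : a < b) (y : ℝ) :
    BddAbove (insert a {x ∈ Ioo a b | f x ≤ y}) := by
  refine ⟨b, ?_⟩
  rintro x (rfl | hx)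
  exacts [hab.le, hx.1.2.le]

lemma branchInv_mem (hab : a < b) (y : ℝ) : branchInv f a b y ∈ Icc a b := by
  refine ⟨le_csSup (branchInv_bddAbove hab y) (mem_insert _ _), csSup_le ⟨a, mem_insert _ _⟩ ?_⟩
  rintro x (rfl | hx)
  exacts [hab.le, hx.1.2.le]

lemma branchInv_mono (hab : a < b) : Monotone (branchInv f a b) := by
  intro y z hyz
  refine csSup_le_csSup (branchInv_bddAbove hab z) ⟨a, mem_insert _ _⟩ (insert_subset_insert ?_)
  exact fun x hx => ⟨hx.1, hx.2.trans hyz⟩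

lemma branchInv_apply (hab : a < b) (hf : StrictMonoOn f (Ioo a b)) {x : ℝ} (hx : x ∈ Ioo a b) :
    branchInv f a b (f x) = x := by
  refine le_antisymm (csSup_le ⟨a, mem_insert _ _⟩ ?_)
    (le_csSup (branchInv_bddAbove hab _) (Or.inr ⟨hx, le_rfl⟩))
  rintro z (rfl | hz)
  exacts [hx.1.le, (hf.le_iff_le hz.1 hx).1 hz.2]

/-- By the intermediate value theorem the image of the branch is an interval, so `branchInv` takes
values in the open branch only over that image. -/
lemma apply_branchInv (hab : a < b) (hf : StrictMonoOn f (Ioo a b))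
    (hc : ContinuousOn f (Ioo a b)) {y : ℝ} (hy : branchInv f a b y ∈ Ioo a b) :
    f (branchInv f a b y) = y := by
  by_cases hyf : y ∈ f '' Ioo a b
  · obtain ⟨x, hx, rfl⟩ := hyf
    rw [branchInv_apply hab hf hx]
  exfalso
  have hoc : OrdConnected (f '' Ioo a b) :=
    (isPreconnected_Ioo.image f hc).ordConnected
  by_cases hne : ∃ x ∈ Ioo a b, f x ≤ y
  · obtain ⟨x₀, hx₀, hx₀y⟩ := hne
    have hall : ∀ x ∈ Ioo a b, f x ≤ y := by
      intro x hx
      by_contra hlt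
      exact hyf (hoc.out (mem_image_of_mem f hx₀) (mem_image_of_mem f hx)
        ⟨hx₀y, (not_le.1 hlt).le⟩)
    obtain ⟨x, hx1, hx2⟩ := exists_between hy.2
    have := le_csSup (branchInv_bddAbove (f := f) hab y)
      (Or.inr ⟨⟨hy.1.trans hx1, hx2⟩, hall x ⟨hy.1.trans hx1, hx2⟩⟩ : x ∈ insert a _)
    exact absurd hx1 (not_lt.2 this)
  · have : {x ∈ Ioo a b | f x ≤ y} = ∅ := by
      ext x; simp only [mem_empty_iff_false, iff_false]; exact fun hx => hne ⟨x, hx.1, hx.2⟩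
    rw [branchInv, this, insert_empty_eq, csSup_singleton] at hy
    exact lt_irrefl _ hy.1

end Branch

/-- The union of the two open branches. -/
def Branches : Set ℝ := Ioo (-(1 / 2)) 0 ∪ Ioo 0 (1 / 2)

lemma measurableSet_Branches : MeasurableSet Branches := measurableSet_Ioo.union measurableSet_Ioo

open Classical in
/-- The weight `1 / f'`, set to `0` off the open branches. The boundary terms in the Lasota–Yorke
inequality are thereby part of the variation of the weight. -/
def wt (f' : ℝ → ℝ) (x : ℝ) : ℝ := if x ∈ Branches then 1 / f' x else 0

/-- The transfer operator `h ↦ ∑_{f x = y} h x / f' x` of `f`. -/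
def transfer (f f' h : ℝ → ℝ) (y : ℝ) : ℝ :=
  wt f' (branchInv f (-(1 / 2)) 0 y) * h (branchInv f (-(1 / 2)) 0 y)
    + wt f' (branchInv f 0 (1 / 2) y) * h (branchInv f 0 (1 / 2) y)

/-- The weight of the `n`-th iterate, the product of `wt f'` along `x, f x, …, f^[n-1] x`. -/
def wtn (f f' : ℝ → ℝ) : ℕ → ℝ → ℝ
  | 0 => fun _ => 1
  | n + 1 => fun x => wt f' x * wtn f f' n (f x)

lemma wt_of_mem {f' : ℝ → ℝ} {x : ℝ} (hx : x ∈ Branches) : wt f' x = 1 / f' x := if_pos hx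

lemma wt_of_notMem {f' : ℝ → ℝ} {x : ℝ} (hx : x ∉ Branches) : wt f' x = 0 := if_neg hx

lemma Branches_subset : Branches ⊆ I01 \ {0} := by
  rintro x (hx | hx)
  · exact ⟨⟨hx.1.le, by linarith [hx.2]⟩, hx.2.ne⟩
  · exact ⟨⟨by linarith [hx.1], hx.2.le⟩, hx.1.ne'⟩

/-- Since the weight vanishes at the ends of both branches, each of the two terms of `transfer` is
a monotone reparametrisation of `wt f' * h` on a closed branch. -/
lemma variation_transfer_le (f f' h : ℝ → ℝ) :
    eVariationOn (transfer f f' h) I01 ≤ eVariationOn (fun x => wt f' x * h x) I01 := by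
  refine (eVariationOn_add_le' _ _ _).trans ?_
  rw [eVariationOn_I01_eq (fun x => wt f' x * h x)]
  have h1 : (-(1 / 2) : ℝ) < 0 := by norm_num
  have h2 : (0 : ℝ) < 1 / 2 := by norm_num
  exact add_le_add
    (eVariationOn.comp_le_of_monotoneOn (fun x => wt f' x * h x) (branchInv f (-(1 / 2)) 0)
      ((branchInv_mono h1).monotoneOn _) (fun y _ => branchInv_mem h1 y))
    (eVariationOn.comp_le_of_monotoneOn (fun x => wt f' x * h x) (branchInv f 0 (1 / 2))
      ((branchInv_mono h2).monotoneOn _) (fun y _ => branchInv_mem h2 y))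

lemma branchInv_notMem_Branches {f : ℝ → ℝ} {a b : ℝ} (hab : a < b) (ha : a ∉ Branches)
    (hb : b ∉ Branches) {y : ℝ} (hy : branchInv f a b y ∉ Ioo a b) :
    branchInv f a b y ∉ Branches := by
  have hm := branchInv_mem (f := f) hab y
  rcases hm.1.eq_or_lt with h | h
  · rwa [← h]
  rcases hm.2.eq_or_lt with h' | h'
  · rwa [h']
  exact absurd ⟨h, h'⟩ hy

namespace LorenzMap

variable {f f' : ℝ → ℝ} {c : ℝ}

lemma deriv_pos (H : LorenzMap f f' c) {x : ℝ} (hx : x ∈ Branches) : 0 < f' x :=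
  lt_of_lt_of_le (by linarith [H.one_lt]) (H.le_deriv x (Branches_subset hx))

lemma wt_mem (H : LorenzMap f f' c) (x : ℝ) : wt f' x ∈ Icc 0 (c⁻¹) := by
  have hc : 0 < c := by linarith [H.one_lt]
  by_cases hx : x ∈ Branches
  · rw [wt_of_mem hx, one_div]
    exact ⟨(inv_pos.2 (H.deriv_pos hx)).le,
      inv_anti₀ hc (H.le_deriv x (Branches_subset hx))⟩
  · rw [wt_of_notMem hx]; exact ⟨le_rfl, (inv_pos.2 hc).le⟩

lemma strictMonoOn_of_subset (H : LorenzMap f f' c)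
    {a b : ℝ} (hs : Ioo a b ⊆ Branches) : StrictMonoOn f (Ioo a b) := by
  refine strictMonoOn_of_deriv_pos (convex_Ioo a b) ?_ ?_
  · exact fun x hx => (H.deriv x (Branches_subset (hs hx))).continuousAt.continuousWithinAt
  · intro x hx
    rw [interior_Ioo] at hx
    rw [(H.deriv x (Branches_subset (hs hx))).deriv]
    exact H.deriv_pos (hs hx)

lemma continuousOn_of_subset (H : LorenzMap f f' c)
    {a b : ℝ} (hs : Ioo a b ⊆ Branches) : ContinuousOn f (Ioo a b) :=
  fun x hx => (H.deriv x (Branches_subset (hs hx))).continuousAt.continuousWithinAt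

/-- Setting the weight to `0` off the open branches keeps its variation finite. -/
lemma bv_wt (H : LorenzMap f f' c) : BoundedVariationOn (wt f') I01 := by
  have h1 : BoundedVariationOn (wt f') (Icc (-(1 / 2)) 0) := by
    refine boundedVariationOn_Icc_of_Ioo (by norm_num) ?_
    rw [BoundedVariationOn, eVariationOn.congr (g := fun x => 1 / f' x)
      (fun x hx => wt_of_mem (Or.inl hx))]
    exact H.bv_left.mono Ioo_subset_Ico_self
  have h2 : BoundedVariationOn (wt f') (Icc 0 (1 / 2)) := by
    refine boundedVariationOn_Icc_of_Ioo (by norm_num) ?_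
    rw [BoundedVariationOn, eVariationOn.congr (g := fun x => 1 / f' x)
      (fun x hx => wt_of_mem (Or.inr hx))]
    exact H.bv_right.mono Ioo_subset_Ioc_self
  rw [BoundedVariationOn, eVariationOn_I01_eq]
  exact ENNReal.add_ne_top.2 ⟨h1, h2⟩

lemma wtn_mem (H : LorenzMap f f' c) (n : ℕ) (x : ℝ) : wtn f f' n x ∈ Icc 0 (c⁻¹ ^ n) := by
  have hc : 0 < c := by linarith [H.one_lt]
  induction n generalizing x with
  | zero => simp [wtn]
  | succ n ih =>
    rw [wtn, pow_succ']
    exact ⟨mul_nonneg (H.wt_mem x).1 (ih _).1,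
      mul_le_mul (H.wt_mem x).2 (ih _).2 (ih _).1 (inv_pos.2 hc).le⟩

lemma enorm_wtn_le_one (H : LorenzMap f f' c) (n : ℕ) (x : ℝ) : ‖wtn f f' n x‖ₑ ≤ 1 := by
  have hc := H.one_lt
  rw [Real.enorm_of_nonneg (H.wtn_mem n x).1, ← ENNReal.ofReal_one]
  refine ENNReal.ofReal_le_ofReal ((H.wtn_mem n x).2.trans ?_)
  exact pow_le_one₀ (by positivity) (inv_le_one_of_one_le₀ hc.le)

lemma enorm_wt_le_one (H : LorenzMap f f' c) (x : ℝ) : ‖wt f' x‖ₑ ≤ 1 := by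
  simpa [wtn] using H.enorm_wtn_le_one 1 x

lemma bv_wtn (H : LorenzMap f f' c) (n : ℕ) : BoundedVariationOn (wtn f f' n) I01 := by
  induction n with
  | zero =>
    rw [BoundedVariationOn, wtn, eVariationOn.constant_on]
    · simp
    · rintro _ ⟨x, _, rfl⟩ _ ⟨y, _, rfl⟩; rfl
  | succ n ih =>
    have key : ∀ a b : ℝ, Ioo a b ⊆ Branches →
        BoundedVariationOn (wtn f f' (n + 1)) (Ioo a b) := by
      intro a b hs
      have hI : Ioo a b ⊆ I01 := fun x hx => (Branches_subset (hs hx)).1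
      have h1 : eVariationOn (wtn f f' n ∘ f) (Ioo a b) ≠ ∞ :=
        ne_top_of_le_ne_top ih (eVariationOn.comp_le_of_monotoneOn _ f
          (H.strictMonoOn_of_subset hs).monotoneOn (fun x hx => H.maps (hI hx)))
      refine ne_top_of_le_ne_top ?_ (eVariationOn_mul_le (u := wt f') (v := wtn f f' n ∘ f)
        (fun x _ => H.enorm_wt_le_one x) (fun x _ => H.enorm_wtn_le_one n (f x)))
      rw [one_mul, one_mul]
      exact ENNReal.add_ne_top.2 ⟨h1, H.bv_wt.mono hI⟩
    rw [BoundedVariationOn, eVariationOn_I01_eq]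
    exact ENNReal.add_ne_top.2
      ⟨boundedVariationOn_Icc_of_Ioo (by norm_num) (key _ _ subset_union_left),
        boundedVariationOn_Icc_of_Ioo (by norm_num) (key _ _ subset_union_right)⟩

/-- `branchInv` is a right inverse of `f` wherever the weight does not vanish. -/
lemma wt_mul_comp_branchInv (H : LorenzMap f f' c)
    {a b : ℝ} (hab : a < b) (hs : Ioo a b ⊆ Branches) (ha : a ∉ Branches)
    (hb : b ∉ Branches) (v : ℝ → ℝ) (y : ℝ) :
    wt f' (branchInv f a b y) * v (f (branchInv f a b y)) = wt f' (branchInv f a b y) * v y := by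
  by_cases hy : branchInv f a b y ∈ Ioo a b
  · rw [apply_branchInv hab (H.strictMonoOn_of_subset hs) (H.continuousOn_of_subset hs) hy]
  · rw [wt_of_notMem (branchInv_notMem_Branches hab ha hb hy), zero_mul, zero_mul]

/-- The transfer operator pulls out functions of the form `v ∘ f`. -/
lemma transfer_comp_mul (H : LorenzMap f f' c) (v h : ℝ → ℝ) (y : ℝ) :
    transfer f f' (fun x => v (f x) * h x) y = v y * transfer f f' h y := by
  have z : (0 : ℝ) ∉ Branches := by simp [Branches]
  have l : (-(1 / 2) : ℝ) ∉ Branches := by rintro (h | h) <;> norm_num at h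
  have r : (1 / 2 : ℝ) ∉ Branches := by rintro (h | h) <;> norm_num at h
  have e1 := H.wt_mul_comp_branchInv (by norm_num) subset_union_left l z v y
  have e2 := H.wt_mul_comp_branchInv (by norm_num) subset_union_right z r v y
  simp only [transfer]
  linear_combination h (branchInv f (-(1 / 2)) 0 y) * e1 + h (branchInv f 0 (1 / 2) y) * e2

/-- Iterating `variation_transfer_le` with the exact weight of the iterate loses nothing. -/
lemma variation_iterate_le (H : LorenzMap f f' c) (n : ℕ) (h : ℝ → ℝ) :
    eVariationOn ((transfer f f')^[n] h) I01 ≤ eVariationOn (fun x => wtn f f' n x * h x) I01 := by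
  induction n generalizing h with
  | zero => simp [wtn]
  | succ n ih =>
    rw [Function.iterate_succ_apply]
    refine (ih _).trans ?_
    have : (fun x => wtn f f' n x * transfer f f' h x)
        = transfer f f' (fun x => wtn f f' n (f x) * h x) :=
      funext fun y => (H.transfer_comp_mul _ _ y).symm
    rw [this]
    refine (variation_transfer_le _ _ _).trans_eq ?_
    simp only [wtn, mul_assoc]

/-- The Lasota–Yorke inequality for the `n`-th iterate. -/
lemma lasota_yorke (H : LorenzMap f f' c) (n : ℕ) : ∃ B : ℝ≥0∞, B ≠ ∞ ∧ ∀ h : ℝ → ℝ,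
    eVariationOn ((transfer f f')^[n] h) I01 ≤
      ENNReal.ofReal (5 * c⁻¹ ^ n) * eVariationOn h I01 + B * ∫⁻ x in I01, ‖h x‖ₑ := by
  have hc := H.one_lt
  obtain ⟨B, hB, hB'⟩ := exists_mul_variation_le (by positivity) (fun x _ => H.wtn_mem n x)
    (H.bv_wtn n)
  exact ⟨B, hB, fun h => (H.variation_iterate_le n h).trans (hB' h)⟩

end LorenzMap


/-! ### Change of variables -/

lemma Branches_ae_eq : (Branches : Set ℝ) =ᵐ[volume] I01 := by
  refine Filter.EventuallyLE.antisymm (LE.le.eventuallyLE fun x hx => (Branches_subset hx).1) ?_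
  have : volume ({-(1 / 2), 0, 1 / 2} : Set ℝ) = 0 := (Set.toFinite _).measure_zero _
  filter_upwards [measure_eq_zero_iff_ae_notMem.1 this] with x hx hxI
  simp only [mem_insert_iff, mem_singleton_iff, not_or] at hx
  rcases lt_or_gt_of_ne hx.2.1 with h | h
  · exact Or.inl ⟨lt_of_le_of_ne hxI.1 (Ne.symm hx.1), h⟩
  · exact Or.inr ⟨h, lt_of_le_of_ne hxI.2 hx.2.2⟩

namespace LorenzMap

variable {f f' : ℝ → ℝ} {c : ℝ}

lemma measurable_wt (H : LorenzMap f f' c) : Measurable (wt f') := by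
  classical
  have : wt f' = fun x => if x ∈ Branches then 1 / _root_.deriv f x else 0 := by
    ext x
    by_cases hx : x ∈ Branches
    · rw [wt_of_mem hx, if_pos hx, (H.deriv x (Branches_subset hx)).deriv]
    · rw [wt_of_notMem hx, if_neg hx]
  rw [this]
  exact Measurable.ite measurableSet_Branches (measurable_const.div (measurable_deriv f))
    measurable_const

lemma measurable_transfer (H : LorenzMap f f' c)
    {h : ℝ → ℝ} (hm : Measurable h) : Measurable (transfer f f' h) := by
  have h1 : Measurable (branchInv f (-(1 / 2)) 0) := (branchInv_mono (by norm_num)).measurable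
  have h2 : Measurable (branchInv f 0 (1 / 2)) := (branchInv_mono (by norm_num)).measurable
  have hw := H.measurable_wt
  exact ((hw.comp h1).mul (hm.comp h1)).add ((hw.comp h2).mul (hm.comp h2))

lemma transfer_nonneg (H : LorenzMap f f' c)
    {h : ℝ → ℝ} (h0 : ∀ x, 0 ≤ h x) (x : ℝ) : 0 ≤ transfer f f' h x :=
  add_nonneg (mul_nonneg (H.wt_mem _).1 (h0 _)) (mul_nonneg (H.wt_mem _).1 (h0 _))

lemma measurable_iterate (H : LorenzMap f f' c) {h : ℝ → ℝ} (hm : Measurable h) (n : ℕ) :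
    Measurable ((transfer f f')^[n] h) := by
  induction n with
  | zero => exact hm
  | succ n ih => rw [Function.iterate_succ_apply']; exact H.measurable_transfer ih

lemma iterate_nonneg (H : LorenzMap f f' c) {h : ℝ → ℝ} (h0 : ∀ x, 0 ≤ h x) (n : ℕ) (x : ℝ) :
    0 ≤ (transfer f f')^[n] h x := by
  induction n generalizing x with
  | zero => exact h0 x
  | succ n ih => rw [Function.iterate_succ_apply']; exact H.transfer_nonneg ih x

/-- Change of variables on one branch. Points `y` not in the image of the branch contribute nothing,
since `branchInv` sends them to an endpoint, where the weight vanishes. -/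
lemma lintegral_branch (H : LorenzMap f f' c)
    {a b : ℝ} (hab : a < b) (hs : Ioo a b ⊆ Branches) (ha : a ∉ Branches)
    (hb : b ∉ Branches) (h : ℝ → ℝ) {A : Set ℝ} (hA : MeasurableSet A) :
    ∫⁻ y in A ∩ I01, ‖wt f' (branchInv f a b y) * h (branchInv f a b y)‖ₑ
      = ∫⁻ x in f ⁻¹' A ∩ Ioo a b, ‖h x‖ₑ := by
  have hmono := H.strictMonoOn_of_subset hs
  have hS : MeasurableSet (f ⁻¹' A ∩ Ioo a b) := (H.meas hA).inter measurableSet_Ioo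
  have hinj : InjOn f (f ⁻¹' A ∩ Ioo a b) := hmono.injOn.mono inter_subset_right
  have hI : MeasurableSet I01 := measurableSet_Icc
  have himg : MeasurableSet (f '' (f ⁻¹' A ∩ Ioo a b)) :=
    hS.image_of_measurable_injOn H.meas hinj
  have e1 : ∫⁻ y in A ∩ I01, ‖wt f' (branchInv f a b y) * h (branchInv f a b y)‖ₑ
      = ∫⁻ y in f '' (f ⁻¹' A ∩ Ioo a b),
          ‖wt f' (branchInv f a b y) * h (branchInv f a b y)‖ₑ := by
    rw [← lintegral_indicator (hA.inter hI), ← lintegral_indicator himg]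
    congr 1
    ext y
    by_cases hy : branchInv f a b y ∈ Ioo a b
    · have hfy := apply_branchInv hab hmono (H.continuousOn_of_subset hs) hy
      have : y ∈ A ∩ I01 ↔ y ∈ f '' (f ⁻¹' A ∩ Ioo a b) := by
        constructor
        · exact fun hyA => ⟨_, ⟨by simpa [hfy] using hyA.1, hy⟩, hfy⟩
        · rintro ⟨x, hx, rfl⟩
          exact ⟨hx.1, H.maps (Branches_subset (hs hx.2)).1⟩
      by_cases hyA : y ∈ A ∩ I01
      · rw [indicator_of_mem hyA, indicator_of_mem (this.1 hyA)]
      · rw [indicator_of_notMem hyA, indicator_of_notMem (mt this.2 hyA)]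
    · simp only [indicator, wt_of_notMem (branchInv_notMem_Branches hab ha hb hy), zero_mul,
        enorm_zero, ite_self]
  rw [e1, lintegral_image_eq_lintegral_abs_deriv_mul hS (f' := f')
    (fun x hx => (H.deriv x (Branches_subset (hs hx.2))).hasDerivWithinAt) hinj]
  refine setLIntegral_congr_fun hS fun x hx => ?_
  have hpos := H.deriv_pos (hs hx.2)
  simp only [branchInv_apply hab hmono hx.2, wt_of_mem (hs hx.2)]
  rw [← Real.enorm_eq_ofReal_abs, ← enorm_mul]
  congr 1
  field_simp

/-- Duality between the transfer operator and composition with `f`. -/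
lemma lintegral_transfer (H : LorenzMap f f' c)
    {h : ℝ → ℝ} (hm : Measurable h) (h0 : ∀ x, 0 ≤ h x) {A : Set ℝ}
    (hA : MeasurableSet A) :
    ∫⁻ y in A ∩ I01, ‖transfer f f' h y‖ₑ = ∫⁻ x in f ⁻¹' A ∩ I01, ‖h x‖ₑ := by
  have z : (0 : ℝ) ∉ Branches := by simp [Branches]
  have l : (-(1 / 2) : ℝ) ∉ Branches := by rintro (h | h) <;> norm_num at h
  have r : (1 / 2 : ℝ) ∉ Branches := by rintro (h | h) <;> norm_num at h
  have e1 := H.lintegral_branch (by norm_num) subset_union_left l z h hA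
  have e2 := H.lintegral_branch (by norm_num) subset_union_right z r h hA
  have m1 : Measurable (branchInv f (-(1 / 2)) 0) := (branchInv_mono (by norm_num)).measurable
  have hd : Disjoint (f ⁻¹' A ∩ Ioo (-(1 / 2)) 0) (f ⁻¹' A ∩ Ioo 0 (1 / 2)) :=
    disjoint_left.2 fun x hx hx' => absurd (hx.2.2.trans hx'.2.1) (lt_irrefl _)
  have e3 : ∫⁻ x in f ⁻¹' A ∩ I01, ‖h x‖ₑ = ∫⁻ x in f ⁻¹' A ∩ Branches, ‖h x‖ₑ :=
    setLIntegral_congr ((ae_eq_refl _).inter Branches_ae_eq.symm)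
  rw [e3, Branches, inter_union_distrib_left,
    lintegral_union ((H.meas hA).inter measurableSet_Ioo) hd, ← e1, ← e2,
    ← lintegral_add_left (show Measurable fun y => ‖wt f' (branchInv f (-(1 / 2)) 0 y)
      * h (branchInv f (-(1 / 2)) 0 y)‖ₑ from
      ((H.measurable_wt.comp m1).mul (hm.comp m1)).enorm)]
  refine lintegral_congr fun y => ?_
  rw [transfer, Real.enorm_of_nonneg (add_nonneg (mul_nonneg (H.wt_mem _).1 (h0 _))
    (mul_nonneg (H.wt_mem _).1 (h0 _))), ENNReal.ofReal_add (mul_nonneg (H.wt_mem _).1 (h0 _))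
    (mul_nonneg (H.wt_mem _).1 (h0 _)), Real.enorm_of_nonneg (mul_nonneg (H.wt_mem _).1 (h0 _)),
    Real.enorm_of_nonneg (mul_nonneg (H.wt_mem _).1 (h0 _))]

lemma lintegral_iterate (H : LorenzMap f f' c)
    {h : ℝ → ℝ} (hm : Measurable h) (h0 : ∀ x, 0 ≤ h x) {A : Set ℝ}
    (hA : MeasurableSet A) (n : ℕ) :
    ∫⁻ y in A ∩ I01, ‖(transfer f f')^[n] h y‖ₑ = ∫⁻ x in f^[n] ⁻¹' A ∩ I01, ‖h x‖ₑ := by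
  induction n generalizing A with
  | zero => rfl
  | succ n ih =>
    rw [Function.iterate_succ_apply', H.lintegral_transfer (H.measurable_iterate hm n)
      (H.iterate_nonneg h0 n) hA, ih (H.meas hA), Function.iterate_succ', preimage_comp]

lemma lintegral_iterate_I01 (H : LorenzMap f f' c)
    {h : ℝ → ℝ} (hm : Measurable h) (h0 : ∀ x, 0 ≤ h x) (n : ℕ) :
    ∫⁻ y in I01, ‖(transfer f f')^[n] h y‖ₑ = ∫⁻ x in I01, ‖h x‖ₑ := by
  simpa using H.lintegral_iterate hm h0 MeasurableSet.univ n

end LorenzMap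

/-! ### Uniform bounds on the iterates -/

lemma volume_I01 : volume I01 = 1 := by
  rw [I01, Real.volume_Icc]; norm_num

namespace LorenzMap

variable {f f' : ℝ → ℝ} {c : ℝ}

/-- Iterating the Lasota–Yorke inequality of one power of `f` that halves the variation; the mass
terms form a geometric series because the transfer operator preserves mass. -/
lemma exists_variation_iterate_le (H : LorenzMap f f' c)
    : ∃ n, 0 < n ∧ ∃ C : ℝ≥0∞, C ≠ ∞ ∧ ∀ h : ℝ → ℝ, Measurable h →
    (∀ x, 0 ≤ h x) → ∀ k, eVariationOn ((transfer f f')^[n * k] h) I01 ≤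
      2⁻¹ ^ k * eVariationOn h I01 + C * ∫⁻ x in I01, ‖h x‖ₑ := by
  have hc := H.one_lt
  obtain ⟨n, hn⟩ := exists_pow_lt_of_lt_one (show (0 : ℝ) < 1 / 10 by norm_num)
    (inv_lt_one_of_one_lt₀ hc)
  have hn0 : 0 < n := by
    rcases Nat.eq_zero_or_pos n with rfl | h
    · norm_num at hn
    · exact h
  obtain ⟨B, hB, hLY⟩ := H.lasota_yorke n
  have hhalf : ENNReal.ofReal (5 * c⁻¹ ^ n) ≤ 2⁻¹ := by
    rw [show (2⁻¹ : ℝ≥0∞) = ENNReal.ofReal (2⁻¹) by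
      rw [ENNReal.ofReal_inv_of_pos (by norm_num)]; simp]
    exact ENNReal.ofReal_le_ofReal (by linarith)
  refine ⟨n, hn0, 2 * B, ENNReal.mul_ne_top (by simp) hB, fun h hm h0 k => ?_⟩
  induction k with
  | zero => simp
  | succ k ih =>
    rw [Nat.mul_succ, add_comm, Function.iterate_add_apply]
    refine (hLY _).trans ?_
    rw [H.lintegral_iterate_I01 hm h0]
    set q := ∫⁻ x in I01, ‖h x‖ₑ
    calc _ ≤ 2⁻¹ * (2⁻¹ ^ k * eVariationOn h I01 + 2 * B * q) + B * q := by gcongr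
      _ = 2⁻¹ ^ (k + 1) * eVariationOn h I01 + (2⁻¹ * 2 * (B * q) + B * q) := by ring
      _ = _ := by
        rw [ENNReal.inv_mul_cancel (by simp) (by simp)]; ring

/-- Some iterate of a nonzero `h` has variation controlled by the mass of `h` alone, with a constant
`C` that does not depend on `h`. -/
lemma exists_eventual_variation_le (H : LorenzMap f f' c)
    : ∃ C : ℝ≥0∞, C ≠ ∞ ∧ ∀ h : ℝ → ℝ, Measurable h →
    (∀ x, 0 ≤ h x) → BoundedVariationOn h I01 → ∫⁻ x in I01, ‖h x‖ₑ ≠ 0 →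
      ∃ m, eVariationOn ((transfer f f')^[m] h) I01 ≤ C * ∫⁻ x in I01, ‖h x‖ₑ := by
  obtain ⟨n, -, C, hC, hn⟩ := H.exists_variation_iterate_le
  refine ⟨1 + C, by finiteness, fun h hm h0 hbv hq => ?_⟩
  have ht : Tendsto (fun k : ℕ => (2⁻¹ : ℝ≥0∞) ^ k * eVariationOn h I01) atTop (𝓝 (0 * _)) :=
    ENNReal.Tendsto.mul_const
      (ENNReal.tendsto_pow_atTop_nhds_zero_of_lt_one (by simp)) (Or.inr hbv)
  rw [zero_mul] at ht
  obtain ⟨k, hk⟩ := (ht.eventually (ge_mem_nhds (pos_iff_ne_zero.2 hq))).exists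
  refine ⟨n * k, (hn h hm h0 k).trans ?_⟩
  rw [add_mul, one_mul]
  gcongr

/-- The densities of the images of Lebesgue measure under the iterates of `f` are uniformly
bounded: they have mass `1` and uniformly bounded variation. -/
lemma exists_volume_preimage_le (H : LorenzMap f f' c)
    : ∃ M : ℝ≥0∞, M ≠ ∞ ∧ ∀ n A, MeasurableSet A →
    volume.restrict I01 (f^[n] ⁻¹' A) ≤ M * volume.restrict I01 A := by
  obtain ⟨n, hn, C, hC, hCn⟩ := H.exists_variation_iterate_le
  have hone : ∫⁻ _ in I01, ‖(1 : ℝ)‖ₑ = 1 := by simp [volume_I01]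
  have hm : ∀ j, Measurable ((transfer f f')^[j] (fun _ => 1)) :=
    H.measurable_iterate measurable_const
  have h0 : ∀ j x, 0 ≤ (transfer f f')^[j] (fun _ => 1) x :=
    H.iterate_nonneg fun _ => zero_le_one
  have hint : ∀ j, ∫⁻ x in I01, ‖(transfer f f')^[j] (fun _ => 1) x‖ₑ = 1 := fun j => by
    rw [H.lintegral_iterate_I01 measurable_const (fun _ => zero_le_one), hone]
  have hfin : ∀ j, eVariationOn ((transfer f f')^[j] (fun _ => 1)) I01 ≠ ∞ := by
    intro j
    obtain ⟨B, hB, hLY⟩ := H.lasota_yorke j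
    refine ne_top_of_le_ne_top ?_ (hLY _)
    rw [hone, eVariationOn.constant_on]
    · simpa using hB
    · rintro _ ⟨x, _, rfl⟩ _ ⟨y, _, rfl⟩; rfl
  -- Write `m = n * (m / n) + m % n`: the remainder contributes one of `n` finite initial variations.
  set D := ∑ j ∈ Finset.range n, eVariationOn ((transfer f f')^[j] (fun _ => 1)) I01 + C with hD
  have hDfin : D ≠ ∞ := ENNReal.add_ne_top.2 ⟨ENNReal.sum_ne_top.2 fun j _ => hfin j, hC⟩
  have hvar : ∀ m, eVariationOn ((transfer f f')^[m] (fun _ => 1)) I01 ≤ D := by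
    intro m
    have := hCn _ (hm (m % n)) (h0 (m % n)) (m / n)
    rw [← Function.iterate_add_apply, Nat.div_add_mod, hint, mul_one] at this
    refine this.trans ?_
    rw [hD]
    gcongr
    calc _ ≤ 1 * eVariationOn ((transfer f f')^[m % n] (fun _ => 1)) I01 := by
          gcongr
          exact pow_le_one₀ (by simp) (by simp)
      _ = eVariationOn ((transfer f f')^[m % n] (fun _ => 1)) I01 := one_mul _
      _ ≤ _ := Finset.single_le_sum
          (f := fun j => eVariationOn ((transfer f f')^[j] (fun _ => (1 : ℝ))) I01)
          (fun _ _ => zero_le) (Finset.mem_range.2 (Nat.mod_lt _ hn))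
  have hsup : ∀ m, ∀ x ∈ I01, ‖(transfer f f')^[m] (fun _ => 1) x‖ₑ ≤ D + 1 := by
    intro m x hx
    have := enorm_mul_volume_le (h := (transfer f f')^[m] (fun _ => 1)) (J := I01) (A := I01)
      measurableSet_Icc le_rfl hx
    rw [volume_I01, mul_one, mul_one, hint] at this
    exact this.trans (by gcongr; exact hvar m)
  refine ⟨D + 1, by finiteness, fun m A hA => ?_⟩
  have hI : MeasurableSet I01 := measurableSet_Icc
  rw [Measure.restrict_apply' hI, Measure.restrict_apply' hI]
  calc volume (f^[m] ⁻¹' A ∩ I01) = ∫⁻ x in f^[m] ⁻¹' A ∩ I01, ‖(1 : ℝ)‖ₑ := by simp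
    _ = ∫⁻ y in A ∩ I01, ‖(transfer f f')^[m] (fun _ => 1) y‖ₑ :=
      (H.lintegral_iterate measurable_const (fun _ => zero_le_one) hA m).symm
    _ ≤ ∫⁻ y in A ∩ I01, (D + 1) := setLIntegral_mono' (hA.inter hI) fun y hy => hsup m y hy.2
    _ = _ := by simp

end LorenzMap

/-! ### Existence of an invariant measure -/

lemma tendsto_measure_biUnion_Ici {α : Type*} [MeasurableSpace α] (lam : Measure α)
    [IsFiniteMeasure lam] {A : ℕ → Set α} (hA : ∀ i, MeasurableSet (A i))
    (hd : Pairwise (Function.onFun Disjoint A)) :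
    Tendsto (fun n => lam (⋃ i ≥ n, A i)) atTop (𝓝 0) :=
  tendsto_measure_biUnion_Ici_zero_of_pairwise_disjoint (fun i => (hA i).nullMeasurableSet) hd

/-- A limit of measures along an ultrafilter, taken set by set, is a measure as soon as the measures
are dominated by a common finite measure: the domination turns finite additivity of the limit into
countable additivity. -/
lemma exists_ultrafilter_limit {α : Type*} [MeasurableSpace α] (lam : Measure α)
    [IsFiniteMeasure lam] {M : ℝ≥0∞} (hM : M ≠ ∞) (ν : ℕ → Measure α)
    (hν : ∀ n A, MeasurableSet A → ν n A ≤ M * lam A) (U : Ultrafilter ℕ) :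
    ∃ μ : Measure α, ∀ A, MeasurableSet A → Tendsto (fun n => ν n A) U (𝓝 (μ A)) := by
  have hex : ∀ A : Set α, ∃ a, Tendsto (fun n => ν n A) U (𝓝 a) := fun A => by
    obtain ⟨a, -, ha⟩ := isCompact_univ.ultrafilter_le_nhds (U.map fun n => ν n A) (by simp)
    exact ⟨a, ha⟩
  choose m hm using hex
  have hle : ∀ A, MeasurableSet A → m A ≤ M * lam A := fun A hA =>
    le_of_tendsto' (hm A) fun n => hν n A hA
  have hadd : ∀ A : ℕ → Set α, (∀ i, MeasurableSet (A i)) → Pairwise (Function.onFun Disjoint A) →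
      m (⋃ i, A i) = ∑' i, m (A i) := by
    intro A hA hd
    have hsplit : ∀ n, m (⋃ i, A i) = ∑ i ∈ Finset.range n, m (A i) + m (⋃ i ≥ n, A i) := by
      intro n
      refine tendsto_nhds_unique (hm _) ?_
      have : Tendsto (fun k => ∑ i ∈ Finset.range n, ν k (A i) + ν k (⋃ i ≥ n, A i)) U
          (𝓝 (∑ i ∈ Finset.range n, m (A i) + m (⋃ i ≥ n, A i))) :=
        (tendsto_finsetSum _ fun i _ => hm (A i)).add (hm _)
      refine this.congr fun k => ?_
      have hmeas : MeasurableSet (⋃ i ≥ n, A i) :=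
        MeasurableSet.iUnion fun i => MeasurableSet.iUnion fun _ => hA i
      rw [← measure_biUnion_finset (fun i _ j _ hij => hd hij) (fun i _ => hA i),
        ← measure_union _ hmeas]
      · congr 1
        ext x
        simp only [mem_union, mem_iUnion, Finset.mem_range, exists_prop]
        constructor
        · rintro (⟨i, -, hi⟩ | ⟨i, -, hi⟩) <;> exact ⟨i, hi⟩
        · rintro ⟨i, hi⟩
          rcases lt_or_ge i n with h | h
          exacts [Or.inl ⟨i, h, hi⟩, Or.inr ⟨i, h, hi⟩]
      · simp only [disjoint_iUnion_left, disjoint_iUnion_right]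
        intro i hi j hj
        exact hd (by have := Finset.mem_range.1 hj; omega)
    have htail : Tendsto (fun n => m (⋃ i ≥ n, A i)) atTop (𝓝 0) := by
      have := ENNReal.Tendsto.const_mul (tendsto_measure_biUnion_Ici lam hA hd) (Or.inr hM)
      rw [mul_zero] at this
      exact tendsto_of_tendsto_of_tendsto_of_le_of_le tendsto_const_nhds this
        (fun _ => zero_le) fun n =>
          hle _ (MeasurableSet.iUnion fun i => MeasurableSet.iUnion fun _ => hA i)
    have h2 := (ENNReal.summable (f := fun i => m (A i))).hasSum.tendsto_sum_nat.add htail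
    rw [add_zero] at h2
    exact tendsto_nhds_unique (tendsto_const_nhds.congr hsplit) h2
  refine ⟨Measure.ofMeasurable (fun A _ => m A) ?_ fun A hA hd => hadd A hA hd, fun A hA => ?_⟩
  · exact le_antisymm ((hle ∅ .empty).trans (by simp)) zero_le
  · rw [Measure.ofMeasurable_apply A hA]
    exact hm A

/-- Krylov–Bogolyubov without a topology: the Cesàro averages of the images of `lam` have a limit
along an ultrafilter because they are dominated by `M • lam`. -/
lemma exists_invariant_of_preimage_le {α : Type*} [MeasurableSpace α] (lam : Measure α)
    [IsProbabilityMeasure lam] {T : α → α} (hT : Measurable T) {M : ℝ≥0∞} (hM : M ≠ ∞)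
    (hdom : ∀ n A, MeasurableSet A → lam (T^[n] ⁻¹' A) ≤ M * lam A) :
    ∃ μ : Measure α, IsProbabilityMeasure μ ∧ μ.map T = μ ∧
      ∀ A, MeasurableSet A → μ A ≤ M * lam A := by
  set ν : ℕ → Measure α := fun k =>
    ((k + 1 : ℕ) : ℝ≥0∞)⁻¹ • ∑ j ∈ Finset.range (k + 1), lam.map T^[j] with hνdef
  have hν : ∀ k A, MeasurableSet A →
      ν k A = ((k + 1 : ℕ) : ℝ≥0∞)⁻¹ * ∑ j ∈ Finset.range (k + 1), lam (T^[j] ⁻¹' A) := by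
    intro k A hA
    rw [hνdef, Measure.smul_apply, Measure.finsetSum_apply, smul_eq_mul]
    simp only [Measure.map_apply (hT.iterate _) hA]
  have hcancel : ∀ (k : ℕ) (x : ℝ≥0∞), ((k + 1 : ℕ) : ℝ≥0∞)⁻¹ * ((k + 1 : ℕ) * x) = x := by
    intro k x
    rw [← mul_assoc, ENNReal.inv_mul_cancel (by simp) (ENNReal.natCast_ne_top _), one_mul]
  have hνle : ∀ k A, MeasurableSet A → ν k A ≤ M * lam A := by
    intro k A hA
    rw [hν k A hA]
    calc _ ≤ ((k + 1 : ℕ) : ℝ≥0∞)⁻¹ * ∑ j ∈ Finset.range (k + 1), M * lam A := by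
          gcongr with j _
          exact hdom j A hA
      _ = _ := by rw [Finset.sum_const, Finset.card_range, nsmul_eq_mul, hcancel]
  obtain ⟨μ, hμ⟩ := exists_ultrafilter_limit lam hM ν hνle (hyperfilter ℕ)
  have hzero : ∀ x : ℕ → ℝ≥0∞, (∀ k, x k ≤ 1) →
      Tendsto (fun k : ℕ => ((k + 1 : ℕ) : ℝ≥0∞)⁻¹ * x k) (hyperfilter ℕ) (𝓝 0) := by
    intro x hx
    have h1 : Tendsto (fun k : ℕ => ((k + 1 : ℕ) : ℝ≥0∞)⁻¹) (hyperfilter ℕ) (𝓝 0) :=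
      ((tendsto_add_atTop_iff_nat 1).2 ENNReal.tendsto_inv_nat_nhds_zero).mono_left
        Nat.hyperfilter_le_atTop
    exact tendsto_of_tendsto_of_tendsto_of_le_of_le tendsto_const_nhds h1 (fun _ => zero_le)
      fun k => mul_le_of_le_one_right' (hx k)
  refine ⟨μ, ⟨?_⟩, ?_, fun A hA => le_of_tendsto' (hμ A hA) fun k => hνle k A hA⟩
  · refine tendsto_nhds_unique (hμ univ .univ) (tendsto_const_nhds.congr fun k => ?_)
    rw [hν k univ .univ]
    simp only [preimage_univ, measure_univ, Finset.sum_const, Finset.card_range, nsmul_eq_mul]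
    rw [hcancel]
  · refine Measure.ext fun A hA => ?_
    rw [Measure.map_apply hT hA]
    have hl := (hμ _ (hT hA)).add (hzero (fun _ => lam A) fun _ => prob_le_one)
    have hr := (hμ A hA).add (hzero (fun k => lam (T^[k + 1] ⁻¹' A)) fun _ => prob_le_one)
    rw [add_zero] at hl hr
    refine tendsto_nhds_unique hl (hr.congr fun k => ?_)
    rw [hν k A hA, hν k _ (hT hA), ← mul_add, ← mul_add,
      ← Finset.sum_range_succ (fun j => lam (T^[j] ⁻¹' A)), Finset.sum_range_succ']
    simp only [Function.iterate_succ', preimage_comp, Function.iterate_zero, preimage_id]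

/-! ### Invariant sets contain an interval of the grid -/

lemma boundedVariationOn_indicator_Ici (u : ℝ) :
    BoundedVariationOn (indicator (Ici u) fun _ => (1 : ℝ)) I01 := by
  have hm : MonotoneOn (indicator (Ici u) fun _ => (1 : ℝ)) I01 := by
    intro x _ y _ hxy
    by_cases hx : x ∈ Ici u
    · rw [indicator_of_mem hx, indicator_of_mem (show y ∈ Ici u from le_trans hx hxy)]
    · rw [indicator_of_notMem hx]
      exact indicator_nonneg (fun _ _ => zero_le_one) _
  have := hm.eVariationOn_eq (a := -(1 / 2)) (b := 1 / 2) (by norm_num [I01]) (by norm_num [I01])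
  rw [show I01 ∩ Icc (-(1 / 2)) (1 / 2) = I01 from inter_self _] at this
  rw [BoundedVariationOn, this]
  exact ENNReal.ofReal_ne_top

lemma boundedVariationOn_indicator_Icc (u v : ℝ) :
    BoundedVariationOn (indicator (Icc u v) fun _ => (1 : ℝ)) I01 := by
  have hle : ∀ (w x : ℝ), ‖indicator (Ici w) (fun _ => (1 : ℝ)) x‖ₑ ≤ 1 := fun w x => by
    by_cases hx : x ∈ Ici w
    · simp [indicator_of_mem hx]
    · simp [indicator_of_notMem hx]
  have heq : indicator (Icc u v) (fun _ => (1 : ℝ)) = fun x =>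
      indicator (Ici u) (fun _ => (1 : ℝ)) x * (indicator (Ici (-v)) (fun _ => (1 : ℝ)) ∘ Neg.neg) x
      := by
    ext x
    simp only [indicator, mem_Icc, mem_Ici, Function.comp_apply, neg_le_neg_iff]
    split_ifs <;> simp_all
  have hneg : eVariationOn (indicator (Ici (-v)) (fun _ => (1 : ℝ)) ∘ Neg.neg) I01 ≠ ∞ :=
    ne_top_of_le_ne_top (boundedVariationOn_indicator_Ici (-v))
      (eVariationOn.comp_le_of_antitoneOn _ _ (fun _ _ _ _ h => neg_le_neg h)
        fun x hx => ⟨by linarith [hx.2], by linarith [hx.1]⟩)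
  rw [heq, BoundedVariationOn]
  refine ne_top_of_le_ne_top ?_ (eVariationOn_mul_le (fun x _ => hle u x) fun x _ => hle (-v) _)
  rw [one_mul, one_mul]
  exact ENNReal.add_ne_top.2 ⟨hneg, boundedVariationOn_indicator_Ici u⟩

/-- By the Lebesgue density theorem a set of positive measure almost fills some interval. -/
lemma exists_Icc_diff_le {E : Set ℝ} (hE : MeasurableSet E) (hpos : volume.restrict I01 E ≠ 0)
    {η : ℝ≥0∞} (hη : η ≠ 0) :
    ∃ u v, u < v ∧ Icc u v ⊆ I01 ∧ volume (Icc u v \ E) ≤ η * volume (Icc u v) := by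
  wlog hη1 : η ≤ 1 generalizing η
  · obtain ⟨u, v, h1, h2, h3⟩ := this one_ne_zero le_rfl
    exact ⟨u, v, h1, h2, h3.trans (by gcongr; exact (not_le.1 hη1).le)⟩
  have hne : volume (E ∩ Branches) ≠ 0 := by
    rwa [measure_congr ((ae_eq_refl E).inter Branches_ae_eq),
      ← Measure.restrict_apply hE]
  have hdens := Besicovitch.ae_tendsto_measure_inter_div volume (E ∩ Branches)
  obtain ⟨x, hx, hxt⟩ : ∃ x ∈ E ∩ Branches, Tendsto (fun r => volume (E ∩ Branches ∩
      Metric.closedBall x r) / volume (Metric.closedBall x r)) (𝓝[>] 0) (𝓝 1) := by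
    by_contra! hcon
    rw [ae_restrict_iff' (hE.inter measurableSet_Branches)] at hdens
    refine hne (measure_mono_null (fun x hx => ?_) hdens)
    exact fun h => hcon x hx (h hx)
  have hev : ∀ᶠ r in 𝓝[>] (0 : ℝ), 1 - η < volume (E ∩ Branches ∩
      Metric.closedBall x r) / volume (Metric.closedBall x r) :=
    hxt.eventually (lt_mem_nhds (ENNReal.sub_lt_self (by simp) (by simp) hη))
  have hopen : IsOpen Branches := isOpen_Ioo.union isOpen_Ioo
  obtain ⟨ε, hε, hεs⟩ := Metric.isOpen_iff.1 hopen x hx.2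
  obtain ⟨r, hr, hr0, hrε⟩ := (hev.and (Ioo_mem_nhdsGT hε)).exists
  have hsub : Icc (x - r) (x + r) ⊆ I01 := by
    rw [← Real.closedBall_eq_Icc]
    exact fun y hy => (Branches_subset (hεs (Metric.closedBall_subset_ball hrε hy))).1
  refine ⟨x - r, x + r, by linarith, hsub, ?_⟩
  rw [Real.closedBall_eq_Icc] at hr
  set J := Icc (x - r) (x + r)
  have hJ0 : volume J ≠ 0 := by simp [J, hr0]
  have hJt : volume J ≠ ∞ := by simp [J]
  have h1 : (1 - η) * volume J ≤ volume (E ∩ J) := by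
    refine (ENNReal.le_div_iff_mul_le (Or.inl hJ0) (Or.inl hJt)).1 (hr.le.trans ?_)
    gcongr
    exact inter_subset_left
  have h2 : volume (E ∩ J) + volume (J \ E) = volume J := by
    rw [inter_comm]; exact measure_inter_add_sdiff J hE
  have h3 : η * volume J + (1 - η) * volume J = volume J := by
    rw [← add_mul, add_tsub_cancel_of_le hη1, one_mul]
  have hfin : volume (E ∩ J) ≠ ∞ := ne_top_of_le_ne_top hJt (measure_mono inter_subset_right)
  refine (ENNReal.add_le_add_iff_left hfin).1 ?_
  rw [h2]
  calc volume J = (1 - η) * volume J + η * volume J := by rw [add_comm, h3]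
    _ ≤ _ := by gcongr

namespace LorenzMap

variable {f f' : ℝ → ℝ} {c : ℝ}

/-- Up to a null set, every invariant set `E` of positive measure contains an interval of one fixed
grid. Push forward the indicator of an interval almost filled by `E`: the mass stays almost inside
`E`, while the variation becomes comparable to the mass. If every grid interval had a definite part
outside `E`, the density would be small on that part on average, hence small on the whole interval up
to its oscillation there; for a fine grid this leaves too little total mass. -/
lemma exists_grid_diff_null (H : LorenzMap f f' c)
    : ∃ N, 0 < N ∧ ∀ E, MeasurableSet E → f ⁻¹' E = E →
    volume.restrict I01 E ≠ 0 → ∃ k < N, volume (Ioc (gridPt N k) (gridPt N (k + 1)) \ E) = 0 := by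
  obtain ⟨C, hC, hCm⟩ := H.exists_eventual_variation_le
  obtain ⟨N, hN, hNC⟩ : ∃ N : ℕ, 0 < N ∧ ENNReal.ofReal (1 / N) * C ≤ 3⁻¹ := by
    have ht : Tendsto (fun N : ℕ => ENNReal.ofReal (1 / N) * C) atTop (𝓝 (ENNReal.ofReal 0 * C)) :=
      ENNReal.Tendsto.mul_const (ENNReal.tendsto_ofReal tendsto_one_div_atTop_nhds_zero_nat)
        (Or.inr hC)
    rw [ENNReal.ofReal_zero, zero_mul] at ht
    obtain ⟨N, h1, h2⟩ := ((ht.eventually (ge_mem_nhds (show (0 : ℝ≥0∞) < 3⁻¹ by simp))).and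
      (eventually_gt_atTop 0)).exists
    exact ⟨N, h2, h1⟩
  refine ⟨N, hN, fun E hE hinv hpos => ?_⟩
  by_contra! hcon
  have hI : MeasurableSet I01 := measurableSet_Icc
  set A : ℕ → Set ℝ := fun k => Ioc (gridPt N k) (gridPt N (k + 1)) \ E with hA
  have hAm : ∀ k, MeasurableSet (A k) := fun k => measurableSet_Ioc.diff hE
  have hAle : ∀ k, volume (A k) ≤ ENNReal.ofReal (1 / N) := fun k =>
    (measure_mono sdiff_subset).trans_eq (volume_grid N k)
  have hNr : ENNReal.ofReal (1 / N) ≤ 1 := by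
    rw [ENNReal.ofReal_le_one, div_le_one (by positivity)]
    exact_mod_cast hN
  obtain ⟨k₀, hk₀, hτ⟩ := Finset.exists_min_image (Finset.range N) (fun k => volume (A k))
    ⟨0, Finset.mem_range.2 hN⟩
  set τ := volume (A k₀) with hτdef
  have hτ0 : τ ≠ 0 := hcon k₀ (Finset.mem_range.1 hk₀)
  have hτt : τ ≠ ∞ := ne_top_of_le_ne_top ENNReal.ofReal_ne_top (hAle k₀)
  -- The proportion outside `E` is chosen so that, divided by `τ`, it is still at most `1 / 3`.
  obtain ⟨u, v, huv, hJ, hJE⟩ := exists_Icc_diff_le hE hpos (η := τ * 3⁻¹)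
    (mul_ne_zero hτ0 (by simp))
  set h : ℝ → ℝ := indicator (Icc u v) fun _ => 1 with hh
  have hm : Measurable h := measurable_const.indicator measurableSet_Icc
  have h0 : ∀ x, 0 ≤ h x := fun x => indicator_nonneg (fun _ _ => zero_le_one) x
  have hint : ∀ S, MeasurableSet S → ∫⁻ x in S, ‖h x‖ₑ = volume (Icc u v ∩ S) := by
    intro S hS
    have : ∀ x, ‖h x‖ₑ = indicator (Icc u v) (fun _ => 1) x := fun x => by
      rw [hh, enorm_indicator_eq_indicator_enorm]; simp
    simp only [this]
    rw [lintegral_indicator measurableSet_Icc, setLIntegral_const, one_mul,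
      Measure.restrict_apply measurableSet_Icc]
  set q := volume (Icc u v) with hq
  have hq0 : q ≠ 0 := by simp [hq, huv]
  have hqt : q ≠ ∞ := by simp [hq]
  have hqI : ∫⁻ x in I01, ‖h x‖ₑ = q := by rw [hint _ hI, inter_eq_self_of_subset_left hJ]
  obtain ⟨m, hm'⟩ := hCm h hm h0 (boundedVariationOn_indicator_Icc u v) (by rwa [hqI])
  rw [hqI] at hm'
  set g := (transfer f f')^[m] h with hg
  have hgq : ∫⁻ x in I01, ‖g x‖ₑ = q := by rw [hg, H.lintegral_iterate_I01 hm h0, hqI]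
  -- The mass of `g` outside `E` is that of `h`, by invariance.
  have hgE : ∫⁻ x in I01 ∩ Eᶜ, ‖g x‖ₑ ≤ τ * 3⁻¹ * q := by
    have hinvm : f^[m] ⁻¹' Eᶜ = Eᶜ :=
      (congrFun (preimage_iterate_eq (f := f) (n := m)) Eᶜ).trans
        (Function.iterate_fixed (by rw [preimage_compl, hinv]) m)
    rw [inter_comm, hg, H.lintegral_iterate hm h0 hE.compl, hinvm, hint _ (hE.compl.inter hI)]
    exact (measure_mono (inter_subset_inter_right _ inter_subset_left)).trans hJE
  have hk : ∀ k ∈ Finset.range N, ∫⁻ x in Ioc (gridPt N k) (gridPt N (k + 1)) ∩ univ, ‖g x‖ₑ ≤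
      ENNReal.ofReal (1 / N) * eVariationOn g (Icc (gridPt N k) (gridPt N (k + 1)))
        + τ⁻¹ * ∫⁻ x in Ioc (gridPt N k) (gridPt N (k + 1)) ∩ Eᶜ, ‖g x‖ₑ := by
    intro k hkN
    set V := eVariationOn g (Icc (gridPt N k) (gridPt N (k + 1)))
    have hpt : ∀ x ∈ Ioc (gridPt N k) (gridPt N (k + 1)),
        ‖g x‖ₑ ≤ V + τ⁻¹ * ∫⁻ y in A k, ‖g y‖ₑ := by
      intro x hx
      have ha0 : volume (A k) ≠ 0 := hcon k (Finset.mem_range.1 hkN)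
      have hat : volume (A k) ≠ ∞ := ne_top_of_le_ne_top ENNReal.ofReal_ne_top (hAle k)
      have := enorm_mul_volume_le (h := g) (hAm k)
        (sdiff_subset.trans Ioc_subset_Icc_self) (Ioc_subset_Icc_self hx)
      calc ‖g x‖ₑ = ‖g x‖ₑ * volume (A k) / volume (A k) :=
            (ENNReal.mul_div_cancel_right ha0 hat).symm
        _ ≤ (V * volume (A k) + ∫⁻ y in A k, ‖g y‖ₑ) / volume (A k) := by gcongr
        _ = V + (volume (A k))⁻¹ * ∫⁻ y in A k, ‖g y‖ₑ := by
            rw [ENNReal.add_div, ENNReal.mul_div_cancel_right ha0 hat, div_eq_mul_inv, mul_comm _⁻¹]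
        _ ≤ _ := by
            gcongr
            exact hτ k hkN
    rw [inter_univ]
    calc _ ≤ ∫⁻ x in Ioc (gridPt N k) (gridPt N (k + 1)), (V + τ⁻¹ * ∫⁻ y in A k, ‖g y‖ₑ) :=
          setLIntegral_mono' measurableSet_Ioc hpt
      _ = ENNReal.ofReal (1 / N) * V + ENNReal.ofReal (1 / N) * (τ⁻¹ * ∫⁻ y in A k, ‖g y‖ₑ) := by
          rw [setLIntegral_const, volume_grid]; ring
      _ ≤ ENNReal.ofReal (1 / N) * V + 1 * (τ⁻¹ * ∫⁻ y in A k, ‖g y‖ₑ) := by gcongr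
      _ = _ := by rw [one_mul]; rfl
  have hsum := Finset.sum_le_sum hk
  rw [sum_lintegral_grid _ hN .univ, inter_univ, hgq, Finset.sum_add_distrib, ← Finset.mul_sum,
    ← Finset.mul_sum, sum_eVariationOn_grid g hN, sum_lintegral_grid _ hN hE.compl] at hsum
  have hfinal : q ≤ 3⁻¹ * q + 3⁻¹ * q := by
    refine hsum.trans (add_le_add ?_ ?_)
    · calc _ ≤ ENNReal.ofReal (1 / N) * (C * q) := by gcongr
        _ = (ENNReal.ofReal (1 / N) * C) * q := by ring
        _ ≤ _ := by gcongr
    · calc _ ≤ τ⁻¹ * (τ * 3⁻¹ * q) := by gcongr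
        _ = (τ⁻¹ * τ) * (3⁻¹ * q) := by ring
        _ = _ := by rw [ENNReal.inv_mul_cancel hτ0 hτt, one_mul]
  have hr := ENNReal.toReal_mono (by finiteness) hfinal
  rw [ENNReal.toReal_add (by finiteness) (by finiteness), ENNReal.toReal_mul] at hr
  have hqpos := ENNReal.toReal_pos hq0 hqt
  norm_num at hr
  linarith

end LorenzMap

/-! ### Ergodicity -/

/-- An eventually periodic orbit is finite. -/
lemma finite_range_of_iterate_eq {α : Type*} {T : α → α} {x : α} {i j : ℕ} (hij : i < j)
    (h : T^[i] x = T^[j] x) : (range fun n : ℕ => T^[n] x).Finite := by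
  refine ((finite_Iio j).image fun n => T^[n] x).subset ?_
  rintro _ ⟨n, rfl⟩
  induction n using Nat.strong_induction_on with
  | _ n ih =>
    rcases lt_or_ge n j with hn | hn
    · exact ⟨n, hn, rfl⟩
    · have : T^[n] x = T^[n - j + i] x := by
        rw [Function.iterate_add_apply, h, ← Function.iterate_add_apply, Nat.sub_add_cancel hn]
      simp only [this]
      exact ih _ (by omega)

namespace LorenzMap

variable {f f' : ℝ → ℝ} {c : ℝ}

lemma continuousAt_iterate (H : LorenzMap f f' c) {y : ℝ} (hy : ∀ j, f^[j] y ∈ I01 \ {0}) (k : ℕ) :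
    ContinuousAt f^[k] y := by
  induction k with
  | zero => exact continuousAt_id
  | succ k ih =>
    rw [Function.iterate_succ']
    exact (H.deriv _ (hy k)).continuousAt.comp ih

/-- Invariant sets are null or conull for Lebesgue measure on `I`. An orbit dense in `I` meets `0` at
most once, and visits two prescribed intervals one after the other. Moving a neighbourhood along the
orbit from an interval contained in `E` to one disjoint from `E` (up to null sets) contradicts the
invariance of `E`. -/
lemma invariant_null_or_conull (H : LorenzMap f f' c)
    (htrans : ∃ x₀ ∈ I01, I01 ⊆ closure (Set.range fun n : ℕ => f^[n] x₀)) {E : Set ℝ}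
    (hE : MeasurableSet E) (hinv : f ⁻¹' E = E) :
    volume.restrict I01 E = 0 ∨ volume.restrict I01 Eᶜ = 0 := by
  by_contra! hcon
  have hI : MeasurableSet I01 := measurableSet_Icc
  obtain ⟨N, hN, hgrid⟩ := H.exists_grid_diff_null
  obtain ⟨i, hi, hiE⟩ := hgrid E hE hinv hcon.1
  obtain ⟨l, hl, hlE⟩ := hgrid Eᶜ hE.compl (by rw [preimage_compl, hinv]) hcon.2
  obtain ⟨x₀, hx₀, hdense⟩ := htrans
  have hlt : ∀ k, gridPt N k < gridPt N (k + 1) := fun k => by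
    have := gridPt_succ_sub N k
    have : (0 : ℝ) < 1 / N := by positivity
    linarith
  have hsub : ∀ k < N, Ioo (gridPt N k) (gridPt N (k + 1)) ⊆ I01 := fun k hk x hx =>
    ⟨(gridPt_mem hN hk.le).1.trans hx.1.le, hx.2.le.trans (gridPt_mem hN hk).2⟩
  have horb : ∀ n, f^[n] x₀ ∈ I01 := fun n => H.maps.iterate n hx₀
  -- Meeting `0` twice would make the orbit finite.
  obtain ⟨n₀, hn₀⟩ : ∃ n₀, ∀ n ≥ n₀, f^[n] x₀ ≠ 0 := by
    by_contra! h0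
    obtain ⟨a, -, ha⟩ := h0 0
    obtain ⟨b, hb, hb0⟩ := h0 (a + 1)
    have hfin := finite_range_of_iterate_eq (show a < b by omega) (ha.trans hb0.symm)
    refine (Icc_infinite (show (-(1 / 2) : ℝ) < 1 / 2 by norm_num)) (hfin.subset ?_)
    rw [hfin.isClosed.closure_eq] at hdense
    exact hdense
  have hvisit : ∀ k < N, ∀ m, ∃ n ≥ m, f^[n] x₀ ∈ Ioo (gridPt N k) (gridPt N (k + 1)) := by
    intro k hk m
    have hF : ((fun n => f^[n] x₀) '' Iio m).Finite := (finite_Iio m).image _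
    obtain ⟨z, hz, hzF⟩ := ((Ioo_infinite (hlt k)).sdiff hF).nonempty
    obtain ⟨_, hw, n, rfl⟩ := mem_closure_iff.1 (hdense (hsub k hk hz)) _
      (isOpen_Ioo.sdiff hF.isClosed) ⟨hz, hzF⟩
    exact ⟨n, not_lt.1 fun hn => hw.2 ⟨n, hn, rfl⟩, hw.1⟩
  obtain ⟨n, hn, hnU⟩ := hvisit i hi n₀
  obtain ⟨n', hn', hnV⟩ := hvisit l hl n
  set y := f^[n] x₀ with hy
  have hyj : ∀ j, f^[j] y = f^[j + n] x₀ := fun j => (Function.iterate_add_apply f j n x₀).symm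
  set k := n' - n
  have hcont : ContinuousAt f^[k] y := H.continuousAt_iterate (fun j => by
    rw [hyj]; exact ⟨horb _, hn₀ _ (by omega)⟩) k
  have hkV : f^[k] y ∈ Ioo (gridPt N l) (gridPt N (l + 1)) := by
    rw [hyj, Nat.sub_add_cancel hn']; exact hnV
  have hW := inter_mem (isOpen_Ioo.mem_nhds hnU) (hcont (isOpen_Ioo.mem_nhds hkV))
  obtain ⟨M, hM, hMle⟩ := H.exists_volume_preimage_le
  have hinvk : f^[k] ⁻¹' E = E :=
    (congrFun (preimage_iterate_eq (f := f) (n := k)) E).trans (Function.iterate_fixed hinv k)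
  have hVm : MeasurableSet (Ioo (gridPt N l) (gridPt N (l + 1)) ∩ E) := measurableSet_Ioo.inter hE
  have hVE : volume (f^[k] ⁻¹' (Ioo (gridPt N l) (gridPt N (l + 1)) ∩ E) ∩ I01) = 0 := by
    rw [← Measure.restrict_apply' hI]
    refine le_antisymm ((hMle k _ hVm).trans ?_) zero_le
    rw [Measure.restrict_apply' hI, measure_mono_null _ hlE, mul_zero]
    exact fun x hx => ⟨Ioo_subset_Ioc_self hx.1.1, fun h => h hx.1.2⟩
  refine (Measure.measure_pos_of_mem_nhds volume hW).ne' (measure_mono_null ?_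
    (measure_union_null hiE hVE))
  rintro x ⟨hxU, hxV⟩
  by_cases hxE : x ∈ E
  · exact Or.inr ⟨⟨hxV, by rw [← hinvk] at hxE; exact hxE⟩, hsub i hi hxU⟩
  · exact Or.inl ⟨Ioo_subset_Ioc_self hxU, hxE⟩

lemma ergodic_of_absolutelyContinuous (H : LorenzMap f f' c)
    (htrans : ∃ x₀ ∈ I01, I01 ⊆ closure (Set.range fun n : ℕ => f^[n] x₀)) {μ : Measure ℝ}
    (hμ : μ.map f = μ) (hac : μ ≪ volume.restrict I01) : Ergodic f μ where
  measurable := H.meas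
  map_eq := hμ
  aeconst_set := by
    intro s hs hinv
    rw [eventuallyConst_set]
    rcases H.invariant_null_or_conull htrans hs hinv with h | h
    · exact Or.inr (measure_eq_zero_iff_ae_notMem.1 (hac h))
    · exact Or.inl (by filter_upwards [measure_eq_zero_iff_ae_notMem.1 (hac h)] with x hx
                       exact not_not.1 hx)

/-- Two invariant probability measures are both absolutely continuous with respect to their mean,
which is ergodic, so they agree with it. -/
lemma eq_of_absolutelyContinuous (H : LorenzMap f f' c)
    (htrans : ∃ x₀ ∈ I01, I01 ⊆ closure (Set.range fun n : ℕ => f^[n] x₀)) {μ ν : Measure ℝ}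
    [IsProbabilityMeasure μ] [IsProbabilityMeasure ν] (hμ : μ.map f = μ) (hν : ν.map f = ν)
    (hμac : μ ≪ volume.restrict I01) (hνac : ν ≪ volume.restrict I01) : ν = μ := by
  set ρ : Measure ℝ := (2⁻¹ : ℝ≥0∞) • (μ + ν) with hρ
  have : IsProbabilityMeasure ρ := ⟨by
    simp only [hρ, Measure.smul_apply, Measure.add_apply, measure_univ, smul_eq_mul]
    rw [one_add_one_eq_two, ENNReal.inv_mul_cancel (by simp) (by simp)]⟩
  have hρinv : ρ.map f = ρ := by
    rw [hρ, Measure.map_smul, Measure.map_add _ _ H.meas, hμ, hν]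
  have hρac : ρ ≪ volume.restrict I01 :=
    Measure.AbsolutelyContinuous.smul_left (hμac.add_left hνac) _
  have herg := H.ergodic_of_absolutelyContinuous htrans hρinv hρac
  have hle : ∀ s, ρ s = 0 → μ s = 0 ∧ ν s = 0 := by
    intro s hs
    simpa [hρ] using hs
  rw [herg.eq_of_absolutelyContinuous ⟨H.meas, hν⟩ fun s hs => (hle s hs).2,
    herg.eq_of_absolutelyContinuous ⟨H.meas, hμ⟩ fun s hs => (hle s hs).1]

end LorenzMap

/-- A topologically transitive Lorenz-like map `f : I → I`, differentiable
off `0` with derivative at least `c > 1` and with `1/f'` of bounded variation on each branch,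
admits a unique invariant Borel probability measure absolutely continuous with respect to
Lebesgue measure; this measure is ergodic and its density is essentially bounded. -/
theorem statistical_unique_acip
    (f f' : ℝ → ℝ) (c : ℝ) (hc : 1 < c)
    (hfmeas : Measurable f) (hmaps : Set.MapsTo f I01 I01)
    (hderiv : ∀ x ∈ I01 \ ({0} : Set ℝ), HasDerivAt f (f' x) x)
    (hder_ge : ∀ x ∈ I01 \ ({0} : Set ℝ), c ≤ f' x)
    (hBV₁ : BoundedVariationOn (fun x => 1 / f' x) (Set.Ico (-(1 / 2)) 0))
    (hBV₂ : BoundedVariationOn (fun x => 1 / f' x) (Set.Ioc 0 (1 / 2)))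
    (htrans : ∃ x₀ ∈ I01, I01 ⊆ closure (Set.range fun n : ℕ => f^[n] x₀)) :
    ∃ μ : Measure ℝ, IsProbabilityMeasure μ ∧ μ I01ᶜ = 0 ∧
      Measure.map f μ = μ ∧ μ ≪ volume.restrict I01 ∧
      Ergodic f μ ∧
      (∃ M : ℝ, 0 < M ∧
        ∀ᵐ x ∂volume.restrict I01, μ.rnDeriv (volume.restrict I01) x ≤ ENNReal.ofReal M) ∧
      (∀ ν : Measure ℝ, IsProbabilityMeasure ν → ν I01ᶜ = 0 → Measure.map f ν = ν →
        ν ≪ volume.restrict I01 → ν = μ) := by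
  have H : LorenzMap f f' c := ⟨hc, hfmeas, hmaps, hderiv, hder_ge, hBV₁, hBV₂⟩
  have hI : MeasurableSet I01 := measurableSet_Icc
  have : IsProbabilityMeasure (volume.restrict I01) := ⟨by simp [volume_I01]⟩
  obtain ⟨M, hM, hMle⟩ := H.exists_volume_preimage_le
  obtain ⟨μ, hμp, hμinv, hμle⟩ := exists_invariant_of_preimage_le (volume.restrict I01) hfmeas hM
    hMle
  have hac : μ ≪ volume.restrict I01 := Measure.AbsolutelyContinuous.mk fun s hs hs0 => by
    simpa [hs0] using hμle s hs
  refine ⟨μ, hμp, hac (by rw [Measure.restrict_apply hI.compl]; simp), hμinv, hac,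
    H.ergodic_of_absolutelyContinuous htrans hμinv hac, ⟨M.toReal + 1, by positivity, ?_⟩,
    fun ν hνp _ hνinv hνac => H.eq_of_absolutelyContinuous htrans hμinv hνinv hac hνac⟩
  refine ae_le_of_forall_setLIntegral_le_of_sigmaFinite (Measure.measurable_rnDeriv _ _)
    fun s hs _ => (Measure.setLIntegral_rnDeriv_le s).trans ((hμle s hs).trans ?_)
  rw [setLIntegral_const]
  gcongr
  rw [← ENNReal.ofReal_toReal hM]
  exact ENNReal.ofReal_le_ofReal (by simp)
end
end

section
/- Let o ∈ I, let P be a skew product on I×I over a map f : I → I, with (C,ρ)-contracting fibers, such that f is continuous on I \ {o} and P is continuous on (I \ {o}) × I. Let μ̄ be an f-invariant ergodic Borel probability measure on I with μ̄({o}) = 0, and assume that for every continuous φ : I×I → ℝ and every m ≥ 0 the functions (φ∘P^m)⁺ and (φ∘P^m)⁻ are Borel measurable. Then there is a unique Borel probability measure μ̃ on I×I such that ∫ φ dμ̃ = lim_{m→∞} ∫ (φ∘P^m)⁺ dμ̄ for every continuous φ : I×I → ℝ; this measure also satisfies ∫ φ dμ̃ = lim_{m→∞} ∫ (φ∘P^m)⁻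 dμ̄ for every continuous φ, and μ̃ is P-invariant and ergodic. -/
/-!
Write `aₘ(φ) = ∫ (φ ∘ P^m)⁺ dμ` and `bₘ(φ) = ∫ (φ ∘ P^m)⁻ dμ`. Invariance of `μ` makes `aₘ(φ)`
decreasing, hence convergent (`exists_tendsto_integral_fiberSup`), and fiber contraction gives
`aₘ(φ) - bₘ(φ) → 0`. If `ν` is any probability measure on the square with first marginal `μ`
(a lift of `μ`), then `bₘ(φ) ≤ ∫ φ ∘ P^m dν ≤ aₘ(φ)`, so `P^m_* ν` has the limit prescribed by
`aₘ` (`tendsto_integral_iterate`). Applied to `ν = μ ⊗ δ_{y₀}`, compactness of the space of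
probability measures on the square produces the limit measure `μt`; uniqueness is immediate since
integrals of continuous functions determine a measure.

Invariance: `P^m_* ν → μt` weakly, and all these measures have marginal `μ`, which does not charge
`o`. Hence the limit can also be taken against `φ ∘ P`, which is discontinuous only over `o`
(`tendsto_integral_of_continuousOn`), giving `∫ φ ∘ P dμt = lim ∫ φ ∘ P^(m+1) dν = ∫ φ dμt`.

Ergodicity: `μt` is the only `P`-invariant lift of `μ`, because for an invariant lift
`∫ φ ∘ P^m` does not depend on `m`. If `μt` is a convex combination of invariant probability
measures, each of them is absolutely continuous with respect to `μt`, so its marginal is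
`f`-invariant and absolutely continuous with respect to the ergodic `μ`, hence equal to `μ`; so the
measure is `μt`. Thus `μt` is an extreme point of the invariant probability measures.
-/

open MeasureTheory Set Filter Topology

noncomputable section

/-- The interval `I = [-1/2, 1/2] ⊆ ℝ`. -/
abbrev Iv : Set ℝ := Set.Icc (-(1 / 2)) (1 / 2)

instance : Nonempty Iv := ⟨⟨0, by norm_num⟩⟩

/-- The square `Σ = I × I`. -/
abbrev Sq : Type := Iv × Iv

/-- Iterates of a skew product cover the iterates of the base map. -/
lemma skew_iterate_fst {f : Iv → Iv} {g : Sq → Iv} {P : Sq → Sq}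
    (hskew : ∀ p : Sq, P p = (f p.1, g p)) (m : ℕ) (p : Sq) :
    (P^[m] p).1 = f^[m] p.1 := by
  induction m generalizing p with
  | zero => rfl
  | succ m ih => rw [Function.iterate_succ_apply, Function.iterate_succ_apply, ih, hskew]

lemma exists_abs_bound {φ : Sq → ℝ} (hφ : Continuous φ) : ∃ M, ∀ p, |φ p| ≤ M := by
  obtain ⟨M, hM⟩ := isCompact_univ.exists_bound_of_continuousOn hφ.continuousOn
  exact ⟨M, fun p => hM p (mem_univ p)⟩

lemma bddAbove_fiber {P : Sq → Sq} {φ : Sq → ℝ} (hφ : Continuous φ) (m : ℕ) (x : Iv) :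
    BddAbove (range fun y : Iv => φ (P^[m] (x, y))) := by
  obtain ⟨M, hM⟩ := exists_abs_bound hφ
  exact ⟨M, by rintro _ ⟨y, rfl⟩; exact (abs_le.1 (hM _)).2⟩

lemma bddBelow_fiber {P : Sq → Sq} {φ : Sq → ℝ} (hφ : Continuous φ) (m : ℕ) (x : Iv) :
    BddBelow (range fun y : Iv => φ (P^[m] (x, y))) := by
  obtain ⟨M, hM⟩ := exists_abs_bound hφ
  exact ⟨-M, by rintro _ ⟨y, rfl⟩; exact (abs_le.1 (hM _)).1⟩

lemma integrable_of_abs_le {X : Type*} [MeasurableSpace X] (μ : Measure X)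
    [IsProbabilityMeasure μ] {h : X → ℝ} (hh : Measurable h) {M : ℝ} (hM : ∀ x, |h x| ≤ M) :
    Integrable h μ :=
  Integrable.of_bound hh.aestronglyMeasurable M (Eventually.of_forall hM)

lemma integrable_fiberSup {P : Sq → Sq} (μ : Measure Iv) [IsProbabilityMeasure μ]
    {φ : Sq → ℝ} (hφ : Continuous φ) {m : ℕ}
    (hm : Measurable fun x : Iv => ⨆ y : Iv, φ (P^[m] (x, y))) :
    Integrable (fun x : Iv => ⨆ y : Iv, φ (P^[m] (x, y))) μ := by
  obtain ⟨M, hM⟩ := exists_abs_bound hφ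
  refine integrable_of_abs_le μ hm (M := M) fun x => abs_le.2 ⟨?_, ?_⟩
  · exact (abs_le.1 (hM (P^[m] (x, Classical.arbitrary Iv)))).1.trans
      (le_ciSup (bddAbove_fiber hφ m x) (Classical.arbitrary Iv))
  · exact ciSup_le fun y => (abs_le.1 (hM _)).2

lemma integrable_fiberInf {P : Sq → Sq} (μ : Measure Iv) [IsProbabilityMeasure μ]
    {φ : Sq → ℝ} (hφ : Continuous φ) {m : ℕ}
    (hm : Measurable fun x : Iv => ⨅ y : Iv, φ (P^[m] (x, y))) :
    Integrable (fun x : Iv => ⨅ y : Iv, φ (P^[m] (x, y))) μ := by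
  obtain ⟨M, hM⟩ := exists_abs_bound hφ
  refine integrable_of_abs_le μ hm (M := M) fun x => abs_le.2 ⟨?_, ?_⟩
  · exact le_ciInf fun y => (abs_le.1 (hM _)).1
  · exact (ciInf_le (bddBelow_fiber hφ m x) (Classical.arbitrary Iv)).trans
      (abs_le.1 (hM (P^[m] (x, Classical.arbitrary Iv)))).2

/-- Fiberwise oscillations of `φ ∘ P^m` tend to `0` uniformly in the base point: `φ` is
uniformly continuous and the fibers are contracted uniformly. -/
lemma fiberSup_le_fiberInf_add {C ρ : ℝ} (hρ₀ : 0 < ρ) (hρ₁ : ρ < 1) {P : Sq → Sq}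
    (hcontr : ∀ (x y₁ y₂ : Iv) (m : ℕ), 1 ≤ m →
      dist (P^[m] (x, y₁)) (P^[m] (x, y₂)) ≤ C * ρ ^ m)
    {φ : Sq → ℝ} (hφ : Continuous φ) {ε : ℝ} (hε : 0 < ε) :
    ∀ᶠ m in atTop, ∀ x : Iv,
      (⨆ y : Iv, φ (P^[m] (x, y))) ≤ (⨅ y : Iv, φ (P^[m] (x, y))) + ε := by
  obtain ⟨δ, hδ, hφδ⟩ :=
    Metric.uniformContinuous_iff.1 (CompactSpace.uniformContinuous_of_continuous hφ) ε hε
  have h0 : Tendsto (fun m : ℕ => C * ρ ^ m) atTop (𝓝 0) := by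
    simpa using (tendsto_pow_atTop_nhds_zero_of_lt_one hρ₀.le hρ₁).const_mul C
  filter_upwards [h0.eventually_lt_const hδ, eventually_ge_atTop 1] with m hm hm1 x
  refine ciSup_le fun y₁ => ?_
  rw [← sub_le_iff_le_add]
  refine le_ciInf fun y₂ => ?_
  have := hφδ ((hcontr x y₁ y₂ m hm1).trans_lt hm)
  rw [Real.dist_eq] at this
  linarith [(abs_lt.1 this).2]

/-- The integrals of `(φ ∘ P^m)⁺` decrease in `m`, because
`(φ ∘ P^(m+1))⁺ ≤ (φ ∘ P^m)⁺ ∘ f` and `μ` is `f`-invariant; hence they converge. -/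
lemma exists_tendsto_integral_fiberSup {f : Iv → Iv} {g : Sq → Iv} {P : Sq → Sq}
    (hskew : ∀ p : Sq, P p = (f p.1, g p)) {μ : Measure Iv} [IsProbabilityMeasure μ]
    (hf : MeasurePreserving f μ μ) {φ : Sq → ℝ} (hφ : Continuous φ)
    (hm : ∀ m : ℕ, Measurable fun x : Iv => ⨆ y : Iv, φ (P^[m] (x, y))) :
    ∃ L, Tendsto (fun m : ℕ => ∫ x, (⨆ y : Iv, φ (P^[m] (x, y))) ∂μ) atTop (𝓝 L) := by
  have hanti : Antitone fun m : ℕ => ∫ x, (⨆ y : Iv, φ (P^[m] (x, y))) ∂μ := by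
    refine antitone_nat_of_succ_le fun m => ?_
    have hint := integrable_fiberSup μ hφ (hm m)
    calc ∫ x, (⨆ y : Iv, φ (P^[m + 1] (x, y))) ∂μ
        ≤ ∫ x, (⨆ y : Iv, φ (P^[m] (f x, y))) ∂μ := by
          refine integral_mono (integrable_fiberSup μ hφ (hm (m + 1)))
            (hf.integrable_comp_of_integrable hint) fun x => ciSup_le fun y => ?_
          rw [Function.iterate_succ_apply, hskew]
          exact le_ciSup (bddAbove_fiber hφ m (f x)) (g (x, y))
      _ = ∫ x, (⨆ y : Iv, φ (P^[m] (x, y))) ∂(μ.map f) :=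
          (integral_map hf.aemeasurable (hm m).aestronglyMeasurable).symm
      _ = ∫ x, (⨆ y : Iv, φ (P^[m] (x, y))) ∂μ := by rw [hf.map_eq]
  obtain ⟨M, hM⟩ := exists_abs_bound hφ
  refine ⟨_, tendsto_atTop_ciInf hanti ⟨-M, ?_⟩⟩
  rintro _ ⟨m, rfl⟩
  have : ∫ _ : Iv, (-M) ∂μ ≤ ∫ x, (⨆ y : Iv, φ (P^[m] (x, y))) ∂μ :=
    integral_mono (integrable_const _) (integrable_fiberSup μ hφ (hm m)) fun x =>
      (abs_le.1 (hM (P^[m] (x, Classical.arbitrary Iv)))).1.trans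
        (le_ciSup (bddAbove_fiber hφ m x) (Classical.arbitrary Iv))
  simpa using this

lemma tendsto_integral_fiberInf {C ρ : ℝ} (hρ₀ : 0 < ρ) (hρ₁ : ρ < 1) {P : Sq → Sq}
    (hcontr : ∀ (x y₁ y₂ : Iv) (m : ℕ), 1 ≤ m →
      dist (P^[m] (x, y₁)) (P^[m] (x, y₂)) ≤ C * ρ ^ m)
    {μ : Measure Iv} [IsProbabilityMeasure μ] {φ : Sq → ℝ} (hφ : Continuous φ)
    (hs : ∀ m : ℕ, Measurable fun x : Iv => ⨆ y : Iv, φ (P^[m] (x, y)))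
    (hi : ∀ m : ℕ, Measurable fun x : Iv => ⨅ y : Iv, φ (P^[m] (x, y))) {L : ℝ}
    (hL : Tendsto (fun m : ℕ => ∫ x, (⨆ y : Iv, φ (P^[m] (x, y))) ∂μ) atTop (𝓝 L)) :
    Tendsto (fun m : ℕ => ∫ x, (⨅ y : Iv, φ (P^[m] (x, y))) ∂μ) atTop (𝓝 L) := by
  have hdiff : Tendsto (fun m : ℕ => (∫ x, (⨆ y : Iv, φ (P^[m] (x, y))) ∂μ)
      - ∫ x, (⨅ y : Iv, φ (P^[m] (x, y))) ∂μ) atTop (𝓝 0) := by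
    rw [Metric.tendsto_atTop']
    intro ε hε
    obtain ⟨N, hN⟩ := eventually_atTop.1
      (fiberSup_le_fiberInf_add hρ₀ hρ₁ hcontr hφ (half_pos hε))
    refine ⟨N, fun m hmN => ?_⟩
    have hsi := integrable_fiberSup μ hφ (hs m)
    have hii := integrable_fiberInf μ hφ (hi m)
    have h1 : ∫ x, (⨅ y : Iv, φ (P^[m] (x, y))) ∂μ ≤ ∫ x, (⨆ y : Iv, φ (P^[m] (x, y))) ∂μ :=
      integral_mono hii hsi fun x =>
        ciInf_le_ciSup (bddBelow_fiber hφ m x) (bddAbove_fiber hφ m x)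
    have h2 : ∫ x, (⨆ y : Iv, φ (P^[m] (x, y))) ∂μ
        ≤ ∫ x, ((⨅ y : Iv, φ (P^[m] (x, y))) + ε / 2) ∂μ :=
      integral_mono hsi (hii.add (integrable_const _)) (hN m hmN.le)
    rw [integral_add hii (integrable_const _)] at h2
    simp only [integral_const, probReal_univ, one_smul] at h2
    rw [Real.dist_eq, sub_zero, abs_of_nonneg (by linarith)]
    linarith
  simpa using hL.sub hdiff

/-- The push-forwards under `P^m` of any lift `ν` of `μ` converge weakly, to a limit that
depends only on `μ`: the integral of `φ ∘ P^m` lies between those of `(φ ∘ P^m)⁻` and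
`(φ ∘ P^m)⁺`. -/
lemma tendsto_integral_iterate {C ρ : ℝ} (hρ₀ : 0 < ρ) (hρ₁ : ρ < 1) {P : Sq → Sq}
    (hPmeas : Measurable P)
    (hcontr : ∀ (x y₁ y₂ : Iv) (m : ℕ), 1 ≤ m →
      dist (P^[m] (x, y₁)) (P^[m] (x, y₂)) ≤ C * ρ ^ m)
    {μ : Measure Iv} [IsProbabilityMeasure μ] {φ : Sq → ℝ} (hφ : Continuous φ)
    (hs : ∀ m : ℕ, Measurable fun x : Iv => ⨆ y : Iv, φ (P^[m] (x, y)))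
    (hi : ∀ m : ℕ, Measurable fun x : Iv => ⨅ y : Iv, φ (P^[m] (x, y))) {L : ℝ}
    (hL : Tendsto (fun m : ℕ => ∫ x, (⨆ y : Iv, φ (P^[m] (x, y))) ∂μ) atTop (𝓝 L))
    {ν : Measure Sq} [IsProbabilityMeasure ν] (hν : ν.map Prod.fst = μ) :
    Tendsto (fun m : ℕ => ∫ p, φ (P^[m] p) ∂ν) atTop (𝓝 L) := by
  have hfst : MeasurePreserving (Prod.fst : Sq → Iv) ν μ := ⟨measurable_fst, hν⟩
  obtain ⟨M, hM⟩ := exists_abs_bound hφ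
  have hint (m : ℕ) : Integrable (fun p => φ (P^[m] p)) ν :=
    integrable_of_abs_le ν (hφ.measurable.comp (hPmeas.iterate m)) fun p => hM _
  refine tendsto_of_tendsto_of_tendsto_of_le_of_le
    (tendsto_integral_fiberInf hρ₀ hρ₁ hcontr hφ hs hi hL) hL (fun m => ?_) fun m => ?_
  · have hii := integrable_fiberInf μ hφ (hi m)
    calc ∫ x, (⨅ y : Iv, φ (P^[m] (x, y))) ∂μ
        = ∫ x, (⨅ y : Iv, φ (P^[m] (x, y))) ∂(ν.map Prod.fst) := by rw [hν]
      _ = ∫ p, (⨅ y : Iv, φ (P^[m] (p.1, y))) ∂ν :=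
          integral_map hfst.aemeasurable (hi m).aestronglyMeasurable
      _ ≤ ∫ p, φ (P^[m] p) ∂ν :=
          integral_mono (hfst.integrable_comp_of_integrable hii) (hint m) fun p =>
            ciInf_le (bddBelow_fiber hφ m p.1) p.2
  · have hsi := integrable_fiberSup μ hφ (hs m)
    calc ∫ p, φ (P^[m] p) ∂ν
        ≤ ∫ p, (⨆ y : Iv, φ (P^[m] (p.1, y))) ∂ν :=
          integral_mono (hint m) (hfst.integrable_comp_of_integrable hsi) fun p =>
            le_ciSup (bddAbove_fiber hφ m p.1) p.2
      _ = ∫ x, (⨆ y : Iv, φ (P^[m] (x, y))) ∂(ν.map Prod.fst) :=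
          (integral_map hfst.aemeasurable (hs m).aestronglyMeasurable).symm
      _ = ∫ x, (⨆ y : Iv, φ (P^[m] (x, y))) ∂μ := by rw [hν]

/-- The continuous cutoff `min 1 (n * dist x o)`: it vanishes at `o`, and as `n → ∞` it tends
to `1` at every other point. -/
def cutoff (o : Iv) (n : ℕ) (x : Iv) : ℝ := min 1 (n * dist x o)

lemma continuous_cutoff (o : Iv) (n : ℕ) : Continuous (cutoff o n) := by
  unfold cutoff; fun_prop

lemma cutoff_nonneg (o : Iv) (n : ℕ) (x : Iv) : 0 ≤ cutoff o n x :=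
  le_min zero_le_one (by positivity)

lemma cutoff_le_one (o : Iv) (n : ℕ) (x : Iv) : cutoff o n x ≤ 1 := min_le_left _ _

lemma abs_one_sub_cutoff_le (o : Iv) (n : ℕ) (x : Iv) : |1 - cutoff o n x| ≤ 1 :=
  abs_le.2 ⟨by linarith [cutoff_le_one o n x], by linarith [cutoff_nonneg o n x]⟩

lemma tendsto_integral_one_sub_cutoff {o : Iv} {μ : Measure Iv} [IsProbabilityMeasure μ]
    (ho : μ {o} = 0) :
    Tendsto (fun n : ℕ => ∫ x, (1 - cutoff o n x) ∂μ) atTop (𝓝 0) := by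
  have : Tendsto (fun n : ℕ => ∫ x, (1 - cutoff o n x) ∂μ) atTop (𝓝 (∫ _ : Iv, (0 : ℝ) ∂μ)) := by
    refine tendsto_integral_of_dominated_convergence (fun _ => 1)
      (fun n => (continuous_const.sub (continuous_cutoff o n)).aestronglyMeasurable)
      (integrable_const _) (fun n => Eventually.of_forall (abs_one_sub_cutoff_le o n)) ?_
    have hne : ∀ᵐ x ∂μ, x ≠ o := by
      rw [ae_iff]; simpa using ho
    filter_upwards [hne] with x hx
    have hpos : 0 < dist x o := dist_pos.2 hx
    have hlarge : ∀ᶠ n : ℕ in atTop, 1 ≤ (n : ℝ) * dist x o :=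
      (tendsto_natCast_atTop_atTop.atTop_mul_const hpos).eventually_ge_atTop 1
    refine tendsto_const_nhds.congr' ?_
    filter_upwards [hlarge] with n hn
    simp [cutoff, min_eq_left hn]
  simpa using this

lemma continuous_cutoff_mul {o : Iv} {h : Sq → ℝ} {M : ℝ} (hM : ∀ p, |h p| ≤ M)
    (hc : ContinuousOn h {p : Sq | p.1 ≠ o}) (n : ℕ) :
    Continuous fun p : Sq => cutoff o n p.1 * h p := by
  have hcut : Continuous fun p : Sq => cutoff o n p.1 :=
    (continuous_cutoff o n).comp continuous_fst
  refine continuous_iff_continuousAt.2 fun p => ?_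
  by_cases hp : p.1 = o
  · have hz : cutoff o n p.1 = 0 := by simp [cutoff, hp]
    have h0 : Tendsto (fun q : Sq => cutoff o n q.1 * M) (𝓝 p) (𝓝 0) := by
      simpa [hz] using (hcut.tendsto p).mul_const M
    rw [ContinuousAt, hz, zero_mul]
    refine squeeze_zero_norm (fun q => ?_) h0
    rw [Real.norm_eq_abs, abs_mul, abs_of_nonneg (cutoff_nonneg o n q.1)]
    exact mul_le_mul_of_nonneg_left (hM q) (cutoff_nonneg o n q.1)
  · have hopen : IsOpen {q : Sq | q.1 ≠ o} := isOpen_ne_fun continuous_fst continuous_const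
    exact hcut.continuousAt.mul (hc.continuousAt (hopen.mem_nhds hp))

lemma abs_integral_sub_integral_cutoff_le {o : Iv} {μ : Measure Iv} [IsProbabilityMeasure μ]
    {h : Sq → ℝ} (hh : Measurable h) {M : ℝ} (hM : ∀ p, |h p| ≤ M)
    (hc : ContinuousOn h {p : Sq | p.1 ≠ o}) (n : ℕ)
    {ν : Measure Sq} [IsProbabilityMeasure ν] (hν : ν.map Prod.fst = μ) :
    |(∫ p, h p ∂ν) - ∫ p, cutoff o n p.1 * h p ∂ν| ≤ M * ∫ x, (1 - cutoff o n x) ∂μ := by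
  have hcut : Continuous fun x : Iv => 1 - cutoff o n x :=
    continuous_const.sub (continuous_cutoff o n)
  obtain ⟨K, hK⟩ := exists_abs_bound (continuous_cutoff_mul hM hc n)
  have hi₁ := integrable_of_abs_le ν hh hM
  have hi₂ := integrable_of_abs_le ν (continuous_cutoff_mul hM hc n).measurable hK
  have hi₃ : Integrable (fun p : Sq => 1 - cutoff o n p.1) ν :=
    integrable_of_abs_le ν (hcut.measurable.comp measurable_fst)
      fun p => abs_one_sub_cutoff_le o n p.1
  calc |(∫ p, h p ∂ν) - ∫ p, cutoff o n p.1 * h p ∂ν|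
      = |∫ p, (h p - cutoff o n p.1 * h p) ∂ν| := by rw [integral_sub hi₁ hi₂]
    _ ≤ ∫ p, |h p - cutoff o n p.1 * h p| ∂ν := abs_integral_le_integral_abs
    _ ≤ ∫ p, M * (1 - cutoff o n p.1) ∂ν := by
        refine integral_mono (hi₁.sub hi₂).abs (hi₃.const_mul M) fun p => ?_
        have hnn : 0 ≤ 1 - cutoff o n p.1 := by linarith [cutoff_le_one o n p.1]
        calc |h p - cutoff o n p.1 * h p| = |h p| * (1 - cutoff o n p.1) := by
              rw [← one_sub_mul, abs_mul, abs_of_nonneg hnn, mul_comm]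
          _ ≤ M * (1 - cutoff o n p.1) := mul_le_mul_of_nonneg_right (hM p) hnn
    _ = M * ∫ x, (1 - cutoff o n x) ∂(ν.map Prod.fst) := by
        rw [integral_const_mul,
          integral_map measurable_fst.aemeasurable hcut.aestronglyMeasurable]
    _ = M * ∫ x, (1 - cutoff o n x) ∂μ := by rw [hν]

/-- Weak convergence of lifts of `μ` can be tested on bounded functions that are discontinuous
only over the `μ`-null point `o`: the error made by cutting off near `o` is the same for all
lifts, being an integral over the base. -/
lemma tendsto_integral_of_continuousOn {o : Iv} {μ : Measure Iv} [IsProbabilityMeasure μ]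
    (ho : μ {o} = 0) {h : Sq → ℝ} (hh : Measurable h) {M : ℝ} (hM : ∀ p, |h p| ≤ M)
    (hc : ContinuousOn h {p : Sq | p.1 ≠ o})
    {ν : ℕ → Measure Sq} [∀ m, IsProbabilityMeasure (ν m)]
    (hν : ∀ m, (ν m).map Prod.fst = μ) {μt : Measure Sq} [IsProbabilityMeasure μt]
    (hμt : μt.map Prod.fst = μ)
    (hlim : ∀ φ : Sq → ℝ, Continuous φ →
      Tendsto (fun m => ∫ p, φ p ∂(ν m)) atTop (𝓝 (∫ p, φ p ∂μt))) :
    Tendsto (fun m => ∫ p, h p ∂(ν m)) atTop (𝓝 (∫ p, h p ∂μt)) := by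
  rw [Metric.tendsto_atTop]
  intro ε hε
  have hsmall : Tendsto (fun n : ℕ => M * ∫ x, (1 - cutoff o n x) ∂μ) atTop (𝓝 0) := by
    simpa using (tendsto_integral_one_sub_cutoff ho).const_mul M
  obtain ⟨n, hn⟩ := (hsmall.eventually_lt_const (show 0 < ε / 3 by positivity)).exists
  obtain ⟨N, hN⟩ := Metric.tendsto_atTop.1 (hlim _ (continuous_cutoff_mul hM hc n)) (ε / 3)
    (by positivity)
  refine ⟨N, fun m hm => ?_⟩
  have h1 := (abs_le.1 (abs_integral_sub_integral_cutoff_le hh hM hc n (hν m)))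
  have h2 := (abs_le.1 (abs_integral_sub_integral_cutoff_le hh hM hc n hμt))
  have h3 := hN m hm
  rw [Real.dist_eq, abs_lt] at h3 ⊢
  constructor <;> linarith [h1.1, h1.2, h2.1, h2.2, h3.1, h3.2]

/-- A `P`-invariant probability measure that is absolutely continuous with respect to a lift of
`μ` is itself a lift of `μ`: its marginal is `f`-invariant and absolutely continuous with respect
to the ergodic measure `μ`. -/
lemma map_fst_eq_of_absolutelyContinuous {f : Iv → Iv} {g : Sq → Iv} {P : Sq → Sq}
    (hskew : ∀ p : Sq, P p = (f p.1, g p)) {μ : Measure Iv} [IsProbabilityMeasure μ]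
    (herg : Ergodic f μ) {μt ν : Measure Sq} [IsProbabilityMeasure ν]
    (hμt : μt.map Prod.fst = μ) (hν : MeasurePreserving P ν ν) (hac : ν ≪ μt) :
    ν.map Prod.fst = μ := by
  have : IsProbabilityMeasure (ν.map Prod.fst) :=
    Measure.isProbabilityMeasure_map measurable_fst.aemeasurable
  refine herg.eq_of_absolutelyContinuous ⟨herg.measurable, ?_⟩
    (hμt ▸ hac.map measurable_fst)
  have hcomm : f ∘ Prod.fst = Prod.fst ∘ P := by ext1 p; simp [hskew]
  rw [Measure.map_map herg.measurable measurable_fst, hcomm,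
    ← Measure.map_map measurable_fst hν.measurable, hν.map_eq]

/-- For a skew product `P` with `(C,ρ)`-contracting fibers over an ergodic
map `f` (`f` continuous off `o`, `P` continuous off `{o} × I`, with `μ̄{o} = 0`), there is a
unique Borel probability measure `μ̃` on `I×I` with `∫ φ dμ̃ = lim_m ∫ (φ∘P^m)⁺ dμ̄` for every
continuous `φ`; it also satisfies the analogous identity with `(φ∘P^m)⁻`, and it is
`P`-invariant and ergodic. -/
theorem lift_measure_exists_unique_ergodic
    (o : Iv) (C ρ : ℝ) (hC : 0 < C) (hρ₀ : 0 < ρ) (hρ₁ : ρ < 1)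
    (f : Iv → Iv) (hfmeas : Measurable f) (g : Sq → Iv) (hgmeas : Measurable g)
    (P : Sq → Sq) (hPmeas : Measurable P) (hskew : ∀ p : Sq, P p = (f p.1, g p))
    (hfcont : ContinuousOn f ({o}ᶜ : Set Iv))
    (hPcont : ContinuousOn P {p : Sq | p.1 ≠ o})
    (hcontr : ∀ (x y₁ y₂ : Iv) (m : ℕ), 1 ≤ m →
      dist (P^[m] (x, y₁)) (P^[m] (x, y₂)) ≤ C * ρ ^ m)
    (μ : Measure Iv) [IsProbabilityMeasure μ] (herg : Ergodic f μ) (ho : μ {o} = 0)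
    (hmsup : ∀ φ : Sq → ℝ, Continuous φ →
      ∀ m : ℕ, Measurable fun x : Iv => ⨆ y : Iv, φ (P^[m] (x, y)))
    (hminf : ∀ φ : Sq → ℝ, Continuous φ →
      ∀ m : ℕ, Measurable fun x : Iv => ⨅ y : Iv, φ (P^[m] (x, y))) :
    ∃ μt : Measure Sq, IsProbabilityMeasure μt ∧
      (∀ φ : Sq → ℝ, Continuous φ →
        Tendsto (fun m : ℕ => ∫ x, (⨆ y : Iv, φ (P^[m] (x, y))) ∂μ) atTop
          (nhds (∫ p, φ p ∂μt))) ∧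
      (∀ φ : Sq → ℝ, Continuous φ →
        Tendsto (fun m : ℕ => ∫ x, (⨅ y : Iv, φ (P^[m] (x, y))) ∂μ) atTop
          (nhds (∫ p, φ p ∂μt))) ∧
      Measure.map P μt = μt ∧ Ergodic P μt ∧
      (∀ ν : Measure Sq, IsProbabilityMeasure ν →
        (∀ φ : Sq → ℝ, Continuous φ →
          Tendsto (fun m : ℕ => ∫ x, (⨆ y : Iv, φ (P^[m] (x, y))) ∂μ) atTop
            (nhds (∫ p, φ p ∂ν))) → ν = μt) := by
  -- The lift `μ ⊗ δ_{y₀}`, its push-forwards, and their weak limit along an ultrafilter.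
  set ν : Measure Sq := μ.map fun x => (x, Classical.arbitrary Iv) with hνdef
  have hsec : Measurable fun x : Iv => ((x, Classical.arbitrary Iv) : Sq) := by fun_prop
  have hνprob : IsProbabilityMeasure ν := Measure.isProbabilityMeasure_map hsec.aemeasurable
  have hνfst : ν.map Prod.fst = μ := by
    rw [hνdef, Measure.map_map measurable_fst hsec]
    exact Measure.map_id
  have hprob (m : ℕ) : IsProbabilityMeasure (ν.map P^[m]) :=
    Measure.isProbabilityMeasure_map (hPmeas.iterate m).aemeasurable
  have hfst (m : ℕ) : (ν.map P^[m]).map Prod.fst = μ := by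
    have hcomm : Prod.fst ∘ P^[m] = f^[m] ∘ Prod.fst :=
      funext fun p => skew_iterate_fst hskew m p
    rw [Measure.map_map measurable_fst (hPmeas.iterate m), hcomm,
      ← Measure.map_map (hfmeas.iterate m) measurable_fst, hνfst,
      (herg.toMeasurePreserving.iterate m).map_eq]
  have hintmap (m : ℕ) {h : Sq → ℝ} (hh : Measurable h) :
      ∫ p, h p ∂(ν.map P^[m]) = ∫ p, h (P^[m] p) ∂ν :=
    integral_map (hPmeas.iterate m).aemeasurable hh.aestronglyMeasurable
  let νp : ℕ → ProbabilityMeasure Sq := fun m => ⟨ν.map P^[m], hprob m⟩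
  obtain ⟨μp, hμp⟩ : ∃ μp : ProbabilityMeasure Sq,
      Tendsto νp (hyperfilter ℕ : Filter ℕ) (𝓝 μp) :=
    ⟨_, ((hyperfilter ℕ).map νp).le_nhds_lim⟩
  have hweak := ProbabilityMeasure.tendsto_iff_forall_integral_tendsto.1 hμp
  set μt : Measure Sq := (μp : Measure Sq) with hμt
  have hμtprob : IsProbabilityMeasure μt := by rw [hμt]; infer_instance
  have hsup : ∀ φ : Sq → ℝ, Continuous φ →
      Tendsto (fun m : ℕ => ∫ x, (⨆ y : Iv, φ (P^[m] (x, y))) ∂μ) atTop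
        (𝓝 (∫ p, φ p ∂μt)) := by
    intro φ hφ
    obtain ⟨L, hL⟩ := exists_tendsto_integral_fiberSup hskew herg.toMeasurePreserving hφ
      (hmsup φ hφ)
    have h1 := (tendsto_integral_iterate hρ₀ hρ₁ hPmeas hcontr hφ (hmsup φ hφ) (hminf φ hφ) hL
      hνfst).mono_left Nat.hyperfilter_le_atTop
    have h2 := hweak (BoundedContinuousFunction.mkOfCompact ⟨φ, hφ⟩)
    have h3 : Tendsto (fun m => ∫ p, φ (P^[m] p) ∂ν) (hyperfilter ℕ : Filter ℕ)
        (𝓝 (∫ p, φ p ∂μt)) :=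
      h2.congr fun m => hintmap m hφ.measurable
    rwa [tendsto_nhds_unique h1 h3] at hL
  have hlim (φ : Sq → ℝ) (hφ : Continuous φ) {ν' : Measure Sq} [IsProbabilityMeasure ν']
      (hν' : ν'.map Prod.fst = μ) :
      Tendsto (fun m : ℕ => ∫ p, φ (P^[m] p) ∂ν') atTop (𝓝 (∫ p, φ p ∂μt)) :=
    tendsto_integral_iterate hρ₀ hρ₁ hPmeas hcontr hφ (hmsup φ hφ) (hminf φ hφ) (hsup φ hφ) hν'
  have hlimν (φ : Sq → ℝ) (hφ : Continuous φ) :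
      Tendsto (fun m : ℕ => ∫ p, φ p ∂(ν.map P^[m])) atTop (𝓝 (∫ p, φ p ∂μt)) :=
    (hlim φ hφ hνfst).congr fun m => (hintmap m hφ.measurable).symm
  have hμtfst : μt.map Prod.fst = μ := by
    have : IsProbabilityMeasure (μt.map Prod.fst) :=
      Measure.isProbabilityMeasure_map measurable_fst.aemeasurable
    refine ext_of_forall_integral_eq_of_IsFiniteMeasure fun ψ => ?_
    rw [integral_map measurable_fst.aemeasurable ψ.continuous.aestronglyMeasurable]
    refine tendsto_nhds_unique (hlimν (fun p => ψ p.1) (by fun_prop)) ?_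
    refine tendsto_const_nhds.congr fun m => ?_
    rw [← hfst m, integral_map measurable_fst.aemeasurable ψ.continuous.aestronglyMeasurable]
  have hinv : μt.map P = μt := by
    have : IsProbabilityMeasure (μt.map P) :=
      Measure.isProbabilityMeasure_map hPmeas.aemeasurable
    refine ext_of_forall_integral_eq_of_IsFiniteMeasure fun ψ => ?_
    rw [integral_map hPmeas.aemeasurable ψ.continuous.aestronglyMeasurable]
    obtain ⟨M, hM⟩ := exists_abs_bound ψ.continuous
    have h1 := tendsto_integral_of_continuousOn ho (ψ.continuous.measurable.comp hPmeas)
      (fun p => hM (P p)) (ψ.continuous.comp_continuousOn hPcont) hfst hμtfst hlimν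
    have h2 := (hlimν ψ ψ.continuous).comp (tendsto_add_atTop_nat 1)
    refine tendsto_nhds_unique h1 (h2.congr fun m => ?_)
    rw [Function.comp_apply, hintmap _ ψ.continuous.measurable,
      hintmap _ (ψ.continuous.measurable.comp hPmeas)]
    simp only [Function.iterate_succ_apply', Function.comp_apply]
  refine ⟨μt, hμtprob, hsup, fun φ hφ => tendsto_integral_fiberInf hρ₀ hρ₁ hcontr hφ
    (hmsup φ hφ) (hminf φ hφ) (hsup φ hφ), hinv, ?_, fun ν' hν'prob hν' => ?_⟩
  · refine Ergodic.of_mem_extremePoints (mem_extremePoints_iff_left.2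
      ⟨⟨⟨hPmeas, hinv⟩, hμtprob⟩, ?_⟩)
    rintro ν₁ ⟨hν₁, hν₁prob⟩ ν₂ - ⟨a, b, ha, -, -, hab⟩
    have hac : ν₁ ≪ μt := by
      rw [← hab]
      exact ((Measure.absolutelyContinuous_smul ha.ne').add_right _)
    have hν₁fst := map_fst_eq_of_absolutelyContinuous hskew herg hμtfst hν₁ hac
    refine ext_of_forall_integral_eq_of_IsFiniteMeasure fun ψ => ?_
    refine tendsto_nhds_unique ?_ (hlim ψ ψ.continuous hν₁fst)
    refine tendsto_const_nhds.congr fun m => ?_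
    rw [← integral_map (hPmeas.iterate m).aemeasurable ψ.continuous.aestronglyMeasurable,
      (hν₁.iterate m).map_eq]
  · exact ext_of_forall_integral_eq_of_IsFiniteMeasure fun ψ =>
      tendsto_nhds_unique (hν' ψ ψ.continuous) (hsup ψ ψ.continuous)
end
end
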